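/- arXiv:1009.2022 — 9 statements merged into one kernel-verified Lean document; each statement's English description precedes it below -/
import Mathlib

section
/- Let ν ≥ 2 be an integer and let L be the normalized linear-linear loss with parameters a, b ≥ 0, (a,b) ≠ (0,0). For the estimator p̂ = (ν−1)/(N−1), the risk R(p) satisfies R(p) < (a+b)(ν−1)^{ν−2} e^{−(ν−1)} / (ν−2)! for every p ∈ (0,1), and moreover lim_{p→0⁺} R(p) = (a+b)(ν−1)^{ν−2} e^{−(ν−1)} / (ν−2)!. -/
/-!
Put `k = ν - 1`. The estimator is unbiased, and more precisely, writing `x = p̂ / p`, the signed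
error `f_ν(n) (x - 1)` at `n = k + 1 + j` telescopes: it equals `G (j + 1) - G j` with
`G j = C(k + j - 1, k) p ^ k (1 - p) ^ j` (`negBinomPMF_mul_eq_sub`). Moreover `G 0 = 0` and
`G j → 0`. The error is nonnegative for `j` below a threshold `J` and nonpositive from `J` on, so
the risk is `b (G J - G 0) + a (G J - 0) = (a + b) G J`. The threshold is at `n = M + 2` with
`M = ⌊k / p⌋`, which gives the closed form
`R(p) = (a + b) C(M, k) p ^ k (1 - p) ^ (M + 1 - k)` (`risk_eq`).

For the bound, `p ^ k (1 - p) ^ r ≤ k ^ k r ^ r / (k + r) ^ (k + r)`, so with `m = M + 1` it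
suffices that `m * (m - 1) ⋯ (m - k + 1) (m - k) ^ (m - k + 1)`, divided by `m ^ (m + 1)`, is less
than `e ^ (-k)`. This follows by induction on `k`, each step costing a factor
`(1 - 1 / s) ^ s < e⁻¹` (`descFactorial_mul_pow_lt`). The limit is the Poisson limit of the closed
form, since `M p → k` as `p → 0⁺`.
-/

open Real Filter Set

/-- Negative binomial probability function: `f_ν(n) = C(n−1, ν−1) p^ν (1−p)^(n−ν)`. -/
noncomputable def negBinomPMF (ν : ℕ) (p : ℝ) (n : ℕ) : ℝ :=
  (Nat.choose (n - 1) (ν - 1) : ℝ) * p ^ ν * (1 - p) ^ (n - ν)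

/-- Risk of the estimator `g` under loss `L` in inverse binomial sampling. -/
noncomputable def risk (ν : ℕ) (L : ℝ → ℝ) (g : ℕ → ℝ) (p : ℝ) : ℝ :=
  ∑' n : ℕ, if ν ≤ n then negBinomPMF ν p n * L (g n / p) else 0

/-- Normalized linear-linear loss. -/
noncomputable def linLinLoss (a b x : ℝ) : ℝ :=
  if x ≤ 1 then a * (1 - x) else b * (x - 1)

/-- The telescoping potential `C(k + j - 1, k) p ^ k (1 - p) ^ j`. It vanishes at `j = 0` when
`k ≥ 1`, because then `k + 0 - 1 = k - 1 < k`. -/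
noncomputable def potential (k : ℕ) (p : ℝ) (j : ℕ) : ℝ :=
  (Nat.choose (k + j - 1) k : ℝ) * p ^ k * (1 - p) ^ j

lemma negBinomPMF_mul_eq_sub (k : ℕ) (hk : 1 ≤ k) (p : ℝ) (hp : 0 < p) (j : ℕ) :
    negBinomPMF (k + 1) p (j + (k + 1)) * ((k : ℝ) / ((k : ℝ) + j) / p - 1) =
      potential k p (j + 1) - potential k p j := by
  obtain ⟨l, rfl⟩ : ∃ l, k = l + 1 := ⟨k - 1, by omega⟩
  unfold negBinomPMF potential
  have e1 : j + (l + 1 + 1) - 1 = l + j + 1 := by omega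
  have e2 : l + 1 + 1 - 1 = l + 1 := by omega
  have e3 : j + (l + 1 + 1) - (l + 1 + 1) = j := by omega
  have e4 : l + 1 + (j + 1) - 1 = l + j + 1 := by omega
  have e5 : l + 1 + j - 1 = l + j := by omega
  rw [e1, e2, e3, e4, e5]
  have h1 : ((l + j + 1 : ℕ) : ℝ) * ((l + j).choose l : ℝ)
      = ((l + j + 1).choose (l + 1) : ℝ) * ((l + 1 : ℕ) : ℝ) := by
    exact_mod_cast Nat.add_one_mul_choose_eq (l + j) l
  have h2 : ((l + j + 1).choose (l + 1) : ℝ)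
      = ((l + j).choose l : ℝ) + ((l + j).choose (l + 1) : ℝ) := by
    exact_mod_cast Nat.choose_succ_succ (l + j) l
  push_cast at h1 ⊢
  have h3 : ((l : ℝ) + 1 + j) ≠ 0 := by positivity
  have h4 : ((l + j + 1).choose (l + 1) : ℝ) * (((l : ℝ) + 1) / ((l : ℝ) + 1 + j))
      = ((l + j).choose l : ℝ) := by
    field_simp
    linarith
  have h5 : ((l + j + 1).choose (l + 1) : ℝ) * p ^ (l + 1 + 1) *
      (((l : ℝ) + 1) / ((l : ℝ) + 1 + j) / p) = ((l + j).choose l : ℝ) * p ^ (l + 1) := by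
    rw [← h4]
    field_simp
    ring
  linear_combination (1 - p) ^ j * h5 - p ^ (l + 1) * (1 - p) ^ j * h2

lemma tendsto_potential (k : ℕ) (p : ℝ) (hp : 0 < p) (hp1 : p < 1) :
    Tendsto (potential k p) atTop (nhds 0) := by
  rw [← tendsto_add_atTop_iff_nat 1]
  have h := (summable_choose_mul_geometric_of_norm_lt_one (R := ℝ) k (r := 1 - p)
    (by rw [Real.norm_eq_abs, abs_lt]; constructor <;> linarith)).tendsto_atTop_zero
  have h2 := h.mul_const (p ^ k * (1 - p))
  rw [zero_mul] at h2
  refine h2.congr fun j => ?_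
  unfold potential
  rw [show k + (j + 1) - 1 = j + k by omega]
  ring

/-- The risk in closed form; `⌊k / p⌋` is the largest value of `n - 1` at which the estimator does
not fall below `p`. -/
lemma risk_eq (k : ℕ) (hk : 1 ≤ k) (a b : ℝ) (ha : 0 ≤ a) (hb : 0 ≤ b) (p : ℝ) (hp : 0 < p)
    (hp1 : p < 1) :
    risk (k + 1) (linLinLoss a b) (fun n => (k : ℝ) / ((n : ℝ) - 1)) p =
      (a + b) * ((Nat.choose ⌊k * p⁻¹⌋₊ k : ℝ) * p ^ k * (1 - p) ^ (⌊k * p⁻¹⌋₊ + 1 - k)) := by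
  set M := ⌊k * p⁻¹⌋₊ with hM
  have hkpos : (0 : ℝ) < k := by exact_mod_cast hk
  have hMk : k ≤ M := by
    apply Nat.le_floor
    have : 1 ≤ p⁻¹ := (one_le_inv₀ hp).2 hp1.le
    nlinarith
  obtain ⟨J, hJ⟩ : ∃ J, M + 1 = k + J := ⟨M + 1 - k, by omega⟩
  have hG : (Nat.choose M k : ℝ) * p ^ k * (1 - p) ^ (M + 1 - k) = potential k p J := by
    unfold potential
    rw [show k + J - 1 = M by omega, show M + 1 - k = J by omega]
  rw [hG]
  have hG0 : potential k p 0 = 0 := by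
    unfold potential
    rw [Nat.choose_eq_zero_of_lt (by omega)]
    simp
  have hpmf : ∀ j, 0 ≤ negBinomPMF (k + 1) p j := by
    intro j
    unfold negBinomPMF
    have : 0 ≤ 1 - p := by linarith
    positivity
  set t : ℕ → ℝ := fun j => negBinomPMF (k + 1) p (j + (k + 1)) *
    linLinLoss a b ((k : ℝ) / ((k : ℝ) + j) / p) with ht
  have hloss : ∀ x, 0 ≤ linLinLoss a b x := by
    intro x
    unfold linLinLoss
    split_ifs with h
    · exact mul_nonneg ha (by linarith)
    · exact mul_nonneg hb (by linarith)
  -- below the threshold only the overestimation branch of the loss contributes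
  have hlow : ∀ j < J, t j = b * (potential k p (j + 1) - potential k p j) := by
    intro j hj
    rw [← negBinomPMF_mul_eq_sub k hk p hp j]
    have h1 : ((k + j : ℕ) : ℝ) ≤ k * p⁻¹ :=
      (Nat.cast_le.2 (by omega : k + j ≤ M)).trans (Nat.floor_le (by positivity))
    have h2 : 1 ≤ (k : ℝ) / ((k : ℝ) + j) / p := by
      rw [div_div, le_div_iff₀ (by positivity)]
      rw [← div_eq_mul_inv, le_div_iff₀ hp] at h1
      push_cast at h1
      linarith
    simp only [ht, linLinLoss]
    split_ifs with h
    -- at a tie both branches of the loss vanish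
    · rw [le_antisymm h h2]; ring
    · ring
  have hhigh : ∀ j, J ≤ j → t j = -a * (potential k p (j + 1) - potential k p j) := by
    intro j hj
    rw [← negBinomPMF_mul_eq_sub k hk p hp j]
    have h1 : (k : ℝ) * p⁻¹ < ((k + j : ℕ) : ℝ) := by
      refine (Nat.lt_floor_add_one _).trans_le ?_
      exact_mod_cast (by omega : M + 1 ≤ k + j)
    have h2 : (k : ℝ) / ((k : ℝ) + j) / p ≤ 1 := by
      rw [div_div, div_le_one (by positivity)]
      rw [← div_eq_mul_inv, div_lt_iff₀ hp] at h1
      push_cast at h1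
      linarith
    simp only [ht, linLinLoss, if_pos h2]
    ring
  have hsum : HasSum t ((a + b) * potential k p J) := by
    rw [hasSum_iff_tendsto_nat_of_nonneg (fun j => mul_nonneg (hpmf _) (hloss _))]
    have hpart : ∀ n, ∑ i ∈ Finset.range (n + J), t i
        = (a + b) * potential k p J - a * potential k p (n + J) := by
      intro n
      induction n with
      | zero =>
        rw [zero_add, Finset.sum_congr rfl fun j hj => hlow j (Finset.mem_range.1 hj),
          ← Finset.mul_sum, Finset.sum_range_sub, hG0]
        ring
      | succ n ih =>
        rw [show n + 1 + J = n + J + 1 by ring, Finset.sum_range_succ, ih,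
          hhigh (n + J) (by omega)]
        ring
    rw [← tendsto_add_atTop_iff_nat J]
    have h := ((tendsto_add_atTop_iff_nat J).2 (tendsto_potential k p hp hp1)).const_mul a
    have h2 := h.const_sub ((a + b) * potential k p J)
    rw [mul_zero, sub_zero] at h2
    exact h2.congr fun n => (hpart n).symm
  unfold risk
  refine HasSum.tsum_eq ?_
  rw [← hasSum_nat_add_iff' (k + 1)]
  rw [Finset.sum_eq_zero, sub_zero]
  · refine (congrArg (fun f : ℕ → ℝ => HasSum f _) (funext fun j => ?_)).mp hsum
    rw [if_pos (by omega)]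
    simp only [ht]
    rw [show ((j + (k + 1) : ℕ) : ℝ) - 1 = (k : ℝ) + j by push_cast; ring]
  · intro i hi
    rw [if_neg (by simpa using hi)]

/-- `p ^ k (1 - p) ^ r` is maximal at `p = k / (k + r)`. -/
lemma pow_mul_pow_le (k r : ℕ) (hk : 1 ≤ k) (hr : 1 ≤ r) (p : ℝ) (hp : 0 < p) (hp1 : p < 1) :
    p ^ k * (1 - p) ^ r * ((k : ℝ) + r) ^ (k + r) ≤ (k : ℝ) ^ k * (r : ℝ) ^ r := by
  have hk0 : (0 : ℝ) < k := by exact_mod_cast hk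
  have hr0 : (0 : ℝ) < r := by exact_mod_cast hr
  have hq : 0 < 1 - p := by linarith
  set n : ℝ := (k : ℝ) + r with hn
  have hn0 : 0 < n := by positivity
  have h1 : p * n / k ≤ Real.exp (p * n / k - 1) := by
    linarith [Real.add_one_le_exp (p * n / k - 1)]
  have h2 : (1 - p) * n / r ≤ Real.exp ((1 - p) * n / r - 1) := by
    linarith [Real.add_one_le_exp ((1 - p) * n / r - 1)]
  have h3 : (p * n / k) ^ k * ((1 - p) * n / r) ^ r ≤ 1 := by
    calc (p * n / k) ^ k * ((1 - p) * n / r) ^ r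
        ≤ Real.exp (p * n / k - 1) ^ k * Real.exp ((1 - p) * n / r - 1) ^ r := by gcongr
      _ = 1 := by
        rw [← Real.exp_nat_mul, ← Real.exp_nat_mul, ← Real.exp_add, Real.exp_eq_one_iff]
        field_simp
        rw [hn]
        ring
  rw [div_pow, div_pow, div_mul_div_comm, div_le_one (by positivity)] at h3
  calc _ = (p * n) ^ k * ((1 - p) * n) ^ r := by rw [mul_pow, mul_pow, pow_add]; ring
    _ ≤ _ := h3

/-- With `r = m - k` and `m = M + 1`, the left side divided by `m ^ (m + 1)` is
`k! / k ^ k` times the maximum over `p` of `C(M, k) p ^ k (1 - p) ^ r`. -/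
lemma descFactorial_mul_pow_lt (k m : ℕ) (hk : 1 ≤ k) (hm : k < m) :
    (m.descFactorial (k + 1) : ℝ) * ((m - k : ℕ) : ℝ) ^ (m - k) <
      (m : ℝ) ^ (m + 1) * Real.exp (-k) := by
  -- passing from `k` to `k + 1` costs the factor `((s - 1) / s) ^ s < e⁻¹`, where `s = m - k`
  have step : ∀ j : ℕ, j + 1 < m →
      (m.descFactorial (j + 1 + 1) : ℝ) * ((m - (j + 1) : ℕ) : ℝ) ^ (m - (j + 1)) <
      (m.descFactorial (j + 1) : ℝ) * ((m - j : ℕ) : ℝ) ^ (m - j) * Real.exp (-1) := by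
    intro j hj
    obtain ⟨s, hs⟩ : ∃ s, m - j = s + 1 := ⟨m - j - 1, by omega⟩
    have hs' : m - (j + 1) = s := by omega
    rw [Nat.descFactorial_succ m (j + 1), hs, hs']
    have hd : (0 : ℝ) < m.descFactorial (j + 1) := by
      exact_mod_cast Nat.descFactorial_pos.2 (by omega)
    have hs0 : (0 : ℝ) < (s : ℝ) + 1 := by positivity
    have hs1 : (0 : ℝ) < s := by exact_mod_cast (by omega : 0 < s)
    have h1 : (s : ℝ) / (s + 1) < Real.exp (-(1 / (s + 1))) := by
      have := Real.add_one_lt_exp (x := -(1 / ((s : ℝ) + 1))) (by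
        apply neg_ne_zero.2; positivity)
      refine lt_of_eq_of_lt ?_ this
      field_simp
      ring
    have h2 : ((s : ℝ) / (s + 1)) ^ (s + 1) < Real.exp (-1) := by
      calc ((s : ℝ) / (s + 1)) ^ (s + 1) < Real.exp (-(1 / (s + 1))) ^ (s + 1) := by
            gcongr
        _ = Real.exp (-1) := by
            rw [← Real.exp_nat_mul]
            congr 1
            push_cast
            field_simp
    rw [div_pow, div_lt_iff₀ (by positivity)] at h2
    push_cast
    calc (s : ℝ) * m.descFactorial (j + 1) * (s : ℝ) ^ s
        = m.descFactorial (j + 1) * (s : ℝ) ^ (s + 1) := by ring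
      _ < m.descFactorial (j + 1) * (Real.exp (-1) * ((s : ℝ) + 1) ^ (s + 1)) := by gcongr
      _ = _ := by ring
  induction k, hk using Nat.le_induction with
  | base =>
    have := step 0 hm
    simp only [zero_add, Nat.descFactorial_one, Nat.sub_zero] at this
    refine this.trans_eq ?_
    push_cast
    ring
  | succ k hk ih =>
    refine (step k hm).trans ?_
    calc _ < (m : ℝ) ^ (m + 1) * Real.exp (-k) * Real.exp (-1) := by
          exact mul_lt_mul_of_pos_right (ih (by omega)) (Real.exp_pos _)
      _ = _ := by
          rw [mul_assoc, ← Real.exp_add]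
          congr 2
          push_cast
          ring

lemma choose_mul_pow_lt (k M : ℕ) (hk : 1 ≤ k) (hM : k ≤ M) (p : ℝ) (hp : 0 < p) (hp1 : p < 1) :
    (Nat.choose M k : ℝ) * p ^ k * (1 - p) ^ (M + 1 - k) <
      (k : ℝ) ^ k * Real.exp (-k) / k.factorial := by
  obtain ⟨r, hr⟩ : ∃ r, M + 1 = k + r := ⟨M + 1 - k, by omega⟩
  have hk0 : (0 : ℝ) < k := by exact_mod_cast hk
  have h1 := pow_mul_pow_le k r hk (by omega) p hp hp1
  have h2 := descFactorial_mul_pow_lt k (M + 1) hk (by omega)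
  rw [show M + 1 - k = r by omega] at h2 ⊢
  have h3 : ((M + 1).descFactorial (k + 1) : ℝ) = (M + 1) * (k.factorial * M.choose k) := by
    rw [Nat.succ_descFactorial_succ, Nat.descFactorial_eq_factorial_mul_choose]
    push_cast
    ring
  have h4 : (k : ℝ) + r = M + 1 := by exact_mod_cast hr.symm
  rw [h4, ← hr] at h1
  rw [h3] at h2
  have hm : (0 : ℝ) < (M : ℝ) + 1 := by positivity
  rw [lt_div_iff₀ (by positivity)]
  have hc : (0 : ℝ) ≤ k.factorial * M.choose k := by positivity
  push_cast at h2
  -- both estimates are compared after multiplication by `(M + 1) ^ (M + 2)`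
  refine lt_of_mul_lt_mul_right ?_ (by positivity : (0 : ℝ) ≤ ((M : ℝ) + 1) ^ (M + 1 + 1))
  calc (M.choose k : ℝ) * p ^ k * (1 - p) ^ r * k.factorial * ((M : ℝ) + 1) ^ (M + 1 + 1)
      = ((k.factorial : ℝ) * M.choose k * (M + 1)) *
          (p ^ k * (1 - p) ^ r * ((M : ℝ) + 1) ^ (M + 1)) := by ring
    _ ≤ ((k.factorial : ℝ) * M.choose k * (M + 1)) * ((k : ℝ) ^ k * (r : ℝ) ^ r) := by gcongr
    _ = (k : ℝ) ^ k * (((M : ℝ) + 1) * (k.factorial * M.choose k) * (r : ℝ) ^ r) := by ring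
    _ < (k : ℝ) ^ k * (((M : ℝ) + 1) ^ (M + 1 + 1) * Real.exp (-k)) := by gcongr
    _ = _ := by ring

/-- The Poisson limit of the closed form of the risk. -/
lemma tendsto_closed_form (k : ℕ) (hk : 1 ≤ k) :
    Tendsto (fun p : ℝ => (Nat.choose ⌊k * p⁻¹⌋₊ k : ℝ) * p ^ k * (1 - p) ^ (⌊k * p⁻¹⌋₊ + 1 - k))
      (nhdsWithin 0 (Set.Ioi 0)) (nhds ((k : ℝ) ^ k * Real.exp (-k) / k.factorial)) := by
  have hk0 : (0 : ℝ) < k := by exact_mod_cast hk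
  have hinv : Tendsto (fun p : ℝ => p⁻¹) (nhdsWithin 0 (Set.Ioi 0)) atTop :=
    tendsto_inv_nhdsGT_zero
  have hMp : Tendsto (fun p : ℝ => (⌊k * p⁻¹⌋₊ : ℝ) * p) (nhdsWithin 0 (Set.Ioi 0))
      (nhds (k : ℝ)) := by
    have := (tendsto_nat_floor_mul_div_atTop hk0.le).comp hinv
    refine this.congr fun p => ?_
    simp [div_eq_mul_inv]
  have hM : Tendsto (fun p : ℝ => ⌊k * p⁻¹⌋₊) (nhdsWithin 0 (Set.Ioi 0)) atTop :=
    tendsto_nat_floor_atTop.comp (hinv.const_mul_atTop hk0)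
  have hid : Tendsto (fun p : ℝ => p) (nhdsWithin 0 (Set.Ioi 0)) (nhds 0) :=
    tendsto_id.mono_left nhdsWithin_le_nhds
  have hq : Tendsto (fun p : ℝ => 1 - p) (nhdsWithin 0 (Set.Ioi 0)) (nhds 1) := by
    simpa using hid.const_sub 1
  have hlt : ∀ᶠ p : ℝ in nhdsWithin 0 (Set.Ioi 0), 0 < p ∧ p < 1 := Ioo_mem_nhdsGT one_pos
  have hchoose : Tendsto (fun p : ℝ => (Nat.choose ⌊k * p⁻¹⌋₊ k : ℝ) * p ^ k)
      (nhdsWithin 0 (Set.Ioi 0)) (nhds ((k : ℝ) ^ k / k.factorial)) := by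
    have h1 := ((isEquivalent_choose k).comp_tendsto hM).mul
      (Asymptotics.IsEquivalent.refl (u := fun p : ℝ => p ^ k))
    refine h1.symm.tendsto_nhds ?_
    refine ((hMp.pow k).div_const (k.factorial : ℝ)).congr fun p => ?_
    simp only [Function.comp, Pi.mul_apply]
    ring
  have hlog : Tendsto (fun p : ℝ => p⁻¹ * Real.log (1 - p)) (nhdsWithin 0 (Set.Ioi 0))
      (nhds (-1)) := by
    have hd : HasDerivAt (fun p : ℝ => Real.log (1 - p)) (-1) 0 := by
      have := ((hasDerivAt_id (0 : ℝ)).const_sub 1).log (by simp)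
      simpa using this
    have := hd.tendsto_slope_zero_right
    simpa using this
  have hexp : Tendsto (fun p : ℝ => (1 - p) ^ ⌊k * p⁻¹⌋₊) (nhdsWithin 0 (Set.Ioi 0))
      (nhds (Real.exp (-k))) := by
    have h1 := (hMp.mul hlog).rexp
    rw [mul_neg_one] at h1
    refine h1.congr' ?_
    filter_upwards [hlt] with p hp
    have : (⌊k * p⁻¹⌋₊ : ℝ) * p * (p⁻¹ * Real.log (1 - p))
        = (⌊k * p⁻¹⌋₊ : ℝ) * Real.log (1 - p) := by
      have := hp.1.ne'
      field_simp
    rw [this, Real.exp_nat_mul, Real.exp_log (by linarith [hp.2])]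
  have hpow : Tendsto (fun p : ℝ => (1 - p) ^ (⌊k * p⁻¹⌋₊ + 1 - k)) (nhdsWithin 0 (Set.Ioi 0))
      (nhds (Real.exp (-k))) := by
    have h1 := (hexp.mul hq).mul ((hq.pow k).inv₀ (by simp))
    simp only [one_pow, inv_one, mul_one] at h1
    refine h1.congr' ?_
    filter_upwards [hlt, hM.eventually_ge_atTop k] with p hp hMk
    rw [pow_sub₀ _ (by linarith [hp.2]) (by omega), pow_succ]
  have := hchoose.mul hpow
  rwa [div_mul_eq_mul_div] at this

theorem stmt0 (ν : ℕ) (hν : 2 ≤ ν) (a b : ℝ) (ha : 0 ≤ a) (hb : 0 ≤ b)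
    (hab : (a, b) ≠ (0, 0)) :
    (∀ p ∈ Set.Ioo (0 : ℝ) 1,
        risk ν (linLinLoss a b) (fun n => ((ν : ℝ) - 1) / ((n : ℝ) - 1)) p <
          (a + b) * ((ν : ℝ) - 1) ^ (ν - 2) * Real.exp (-((ν : ℝ) - 1)) /
            (Nat.factorial (ν - 2))) ∧
      Filter.Tendsto (risk ν (linLinLoss a b) (fun n => ((ν : ℝ) - 1) / ((n : ℝ) - 1)))
        (nhdsWithin 0 (Set.Ioi 0))
        (nhds ((a + b) * ((ν : ℝ) - 1) ^ (ν - 2) * Real.exp (-((ν : ℝ) - 1)) /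
          (Nat.factorial (ν - 2)))) := by
  obtain ⟨k, rfl⟩ : ∃ k, ν = k + 1 := ⟨ν - 1, by omega⟩
  have hk : 1 ≤ k := by omega
  have hk0 : (0 : ℝ) < k := by exact_mod_cast hk
  have hcast : ((k + 1 : ℕ) : ℝ) - 1 = k := by push_cast; ring
  rw [hcast]
  -- `k ^ (k - 1) / (k - 1)! = k ^ k / k!`
  have hconst : (a + b) * (k : ℝ) ^ (k + 1 - 2) * Real.exp (-(k : ℝ)) / (k + 1 - 2).factorial
      = (a + b) * ((k : ℝ) ^ k * Real.exp (-k) / k.factorial) := by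
    obtain ⟨l, rfl⟩ : ∃ l, k = l + 1 := ⟨k - 1, by omega⟩
    rw [show l + 1 + 1 - 2 = l by omega, Nat.factorial_succ, pow_succ]
    push_cast at hk0 ⊢
    field_simp
  rw [hconst]
  have hpos : 0 < a + b := by
    rcases ha.eq_or_lt with h | h
    · rcases hb.eq_or_lt with h' | h'
      · exact absurd (by rw [← h, ← h']) hab
      · linarith
    · linarith
  constructor
  · intro p hp
    rw [risk_eq k hk a b ha hb p hp.1 hp.2]
    refine mul_lt_mul_of_pos_left (choose_mul_pow_lt k _ hk ?_ p hp.1 hp.2) hpos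
    apply Nat.le_floor
    have : 1 ≤ p⁻¹ := (one_le_inv₀ hp.1).2 hp.2.le
    nlinarith
  · refine ((tendsto_closed_form k hk).const_mul (a + b)).congr' ?_
    filter_upwards [Ioo_mem_nhdsGT (one_pos : (0 : ℝ) < 1)] with p hp
    exact (risk_eq k hk a b ha hb p hp.1 hp.2).symm
end

section
/- Let ν ≥ 2 be an integer and let L be the normalized inverse-linear loss with parameters a, b ≥ 0, (a,b) ≠ (0,0). For the estimator p̂ = Ω_il/(N+d) with any d ∈ [Ω_il−ν, 0], the risk R(p) satisfies R(p) < a(ν/Ω_il − 1) + (aν/Ω_il + b) Ω_il^{ν−1} e^{−Ω_il} / (ν−1)! for every p ∈ (0,1), and moreover lim_{p→0⁺} R(p) = a(ν/Ω_il − 1) + (aν/Ω_il + b) Ω_il^{ν−1} e^{−Ω_il} / (ν−1)!. -/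
/-!
Write `ℓ(y) = L(Ω / y)`, so that the loss of the estimator at `N = n` is `ℓ(p (n + d))`.

*Upper bound.* If `N` is negative binomial and `E₁, E₂, …` are independent exponential variables
of mean `p`, then `S_N = E₁ + ⋯ + E_N` is gamma distributed with shape `ν` and unit rate, whatever
`p` is (`hasSum_mixture`). Given `N = n`, the sum `S_n` is gamma with mean `p n` and
`E (1 / S_n) = 1 / (p (n - 1))`. Since `ℓ(y)` is the maximum of `a (y / Ω - 1)` and
`b (Ω / y - 1)`, affine in `y` and in `1 / y` respectively, a Jensen-type comparison gives
`ℓ(p (n + d)) < E ℓ(S_n)` for all `-1 ≤ d ≤ 0` (`ell_lt_integral`). Averaging over `n` yields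
`R(p) < E ℓ(Y)` with `Y` gamma of shape `ν` (`risk_lt`). The hypothesis on `d` implies
`-1 ≤ d ≤ 0` because `Ω ≥ ν - 1`.

*Closed form.* `Ω` solves `a (Ω - ν) (ν - 1) + b Ω (Ω - ν + 1) = 0` (`OmegaIL_spec`), which is
exactly what removes the incomplete gamma function from `E ℓ(Y)` (`integral_ell_gamDens`).

*Limit.* The local limit `f_ν(⌊y / p⌋) / p → y ^ (ν - 1) e ^ (-y) / (ν - 1)!`
(`tendsto_negBinomPMF_div`) and Fatou's lemma give `liminf R(p) ≥ E ℓ(Y)`; the upper bound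
supplies the other half (`tendsto_risk`).

The lemmas use `ν = k + 2`.
-/

open Real Filter Set

/-- Normalized inverse-linear loss. -/
noncomputable def invLinLoss (a b x : ℝ) : ℝ :=
  if x ≤ 1 then a * (1 / x - 1) else b * (x - 1)

/-- The value `Ω_il` for the inverse-linear loss. -/
noncomputable def OmegaIL (ν : ℕ) (a b : ℝ) : ℝ :=
  if 0 < a ∧ 0 < b then
    ((ν : ℝ) - 1) *
      (1 + (a + b) / (2 * b) *
        (Real.sqrt (1 + 4 * a * b / (((ν : ℝ) - 1) * (a + b) ^ 2)) - 1))
  else if a = 0 then (ν : ℝ) - 1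
  else (ν : ℝ)

open MeasureTheory

/-! ### The loss as a function of `y = p (n + d)` -/

/-- The loss `L(Ω / y)` as a function of `y > 0`. -/
noncomputable def ell (a b Ω y : ℝ) : ℝ := a * max (y / Ω - 1) 0 + b * max (Ω / y - 1) 0

lemma invLinLoss_eq_ell {a b Ω y : ℝ} (hΩ : 0 < Ω) (hy : 0 < y) :
    invLinLoss a b (Ω / y) = ell a b Ω y := by
  unfold invLinLoss ell
  by_cases h : Ω ≤ y
  · have h1 : Ω / y ≤ 1 := by rw [div_le_one hy]; exact h
    have h2 : 1 ≤ y / Ω := by rw [le_div_iff₀ hΩ]; linarith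
    rw [if_pos h1, max_eq_left (by linarith), max_eq_right (by linarith), one_div_div]
    ring
  · push Not at h
    have h1 : 1 < Ω / y := by rw [lt_div_iff₀ hy]; linarith
    have h2 : y / Ω ≤ 1 := by rw [div_le_one hΩ]; exact h.le
    rw [if_neg (not_le.2 h1), max_eq_right (by linarith), max_eq_left (by linarith)]
    ring

lemma ell_nonneg {a b : ℝ} (ha : 0 ≤ a) (hb : 0 ≤ b) (Ω y : ℝ) : 0 ≤ ell a b Ω y := by
  unfold ell; positivity

lemma ell_of_le {a b Ω y : ℝ} (hΩ : 0 < Ω) (h : Ω ≤ y) : ell a b Ω y = a * (y / Ω - 1) := by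
  have hy : 0 < y := hΩ.trans_le h
  have h1 : Ω / y ≤ 1 := by rw [div_le_one hy]; exact h
  have h2 : 1 ≤ y / Ω := by rw [le_div_iff₀ hΩ]; linarith
  unfold ell
  rw [max_eq_left (by linarith), max_eq_right (by linarith)]; ring

lemma ell_of_ge {a b Ω y : ℝ} (hy : 0 < y) (h : y ≤ Ω) : ell a b Ω y = b * (Ω / y - 1) := by
  have hΩ : 0 < Ω := hy.trans_le h
  have h1 : 1 ≤ Ω / y := by rw [le_div_iff₀ hy]; linarith
  have h2 : y / Ω ≤ 1 := by rw [div_le_one hΩ]; exact h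
  unfold ell
  rw [max_eq_right (by linarith), max_eq_left (by linarith)]; ring

@[fun_prop]
lemma measurable_ell (a b Ω : ℝ) : Measurable (ell a b Ω) := by
  unfold ell; fun_prop

lemma continuousAt_ell (a b Ω : ℝ) {y : ℝ} (hy : 0 < y) : ContinuousAt (ell a b Ω) y := by
  unfold ell
  have := hy.ne'
  fun_prop (disch := assumption)

lemma ell_le {a b Ω y : ℝ} (ha : 0 ≤ a) (hb : 0 ≤ b) (hΩ : 0 < Ω) (hy : 0 < y) :
    ell a b Ω y ≤ a * (y / Ω) + b * (Ω / y) := by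
  unfold ell
  gcongr
  · exact max_le (by linarith) (by positivity)
  · exact max_le (by linarith) (by positivity)

/-! ### Gamma densities -/

lemma integral_pow_mul_exp (m : ℕ) {r : ℝ} (hr : 0 < r) :
    ∫ y in Ioi (0 : ℝ), y ^ m * exp (-(r * y)) = m.factorial / r ^ (m + 1) := by
  have h := Real.integral_rpow_mul_exp_neg_mul_Ioi (a := (m : ℝ) + 1) (r := r) (by positivity) hr
  rw [Real.Gamma_nat_eq_factorial] at h
  have e : ((m : ℝ) + 1) = ((m + 1 : ℕ) : ℝ) := by push_cast; ring
  simp only [add_sub_cancel_right, Real.rpow_natCast] at h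
  rw [h, e, Real.rpow_natCast, one_div, inv_pow]
  field_simp

lemma integrableOn_pow_mul_exp (m : ℕ) {r : ℝ} (hr : 0 < r) :
    IntegrableOn (fun y : ℝ => y ^ m * exp (-(r * y))) (Ioi 0) := by
  by_contra h
  have h1 := integral_undef h
  rw [integral_pow_mul_exp m hr] at h1
  have : (0 : ℝ) < m.factorial / r ^ (m + 1) := by positivity
  exact this.ne' h1

/-- Density of the gamma distribution with shape `n + 1` and rate `r`. -/
noncomputable def gamDens (n : ℕ) (r y : ℝ) : ℝ :=
  r ^ (n + 1) / n.factorial * (y ^ n * exp (-(r * y)))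

lemma gamDens_pos (n : ℕ) {r y : ℝ} (hr : 0 < r) (hy : 0 < y) : 0 < gamDens n r y := by
  unfold gamDens; positivity

@[fun_prop]
lemma measurable_gamDens (n : ℕ) (r : ℝ) : Measurable (gamDens n r) := by
  unfold gamDens; fun_prop

lemma integrableOn_gamDens (n : ℕ) {r : ℝ} (hr : 0 < r) : IntegrableOn (gamDens n r) (Ioi 0) :=
  (integrableOn_pow_mul_exp n hr).const_mul _

lemma integral_gamDens (n : ℕ) {r : ℝ} (hr : 0 < r) : ∫ y in Ioi 0, gamDens n r y = 1 := by
  unfold gamDens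
  rw [integral_const_mul, integral_pow_mul_exp n hr]
  have := n.factorial_pos
  field_simp

lemma mul_gamDens (n : ℕ) {r : ℝ} (hr : 0 < r) (y : ℝ) :
    y * gamDens n r y = ((n + 1) / r) * gamDens (n + 1) r y := by
  unfold gamDens
  rw [Nat.factorial_succ]
  have := n.factorial_pos
  push_cast
  field_simp
  ring

lemma inv_mul_gamDens (n : ℕ) (r : ℝ) {y : ℝ} (hy : 0 < y) :
    y⁻¹ * gamDens (n + 1) r y = (r / (n + 1)) * gamDens n r y := by
  unfold gamDens
  rw [Nat.factorial_succ]
  have := n.factorial_pos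
  push_cast
  field_simp
  ring

lemma integrableOn_ell_mul_gamDens {a b Ω r : ℝ} (ha : 0 ≤ a) (hb : 0 ≤ b) (hΩ : 0 < Ω)
    (hr : 0 < r) (n : ℕ) :
    IntegrableOn (fun y => ell a b Ω y * gamDens (n + 1) r y) (Ioi 0) := by
  have h1 := (integrableOn_gamDens (n + 2) hr).const_mul (a / Ω * ((n + 1 + 1) / r))
  have h2 := (integrableOn_gamDens n hr).const_mul (b * Ω * (r / (n + 1)))
  refine (h1.add h2).mono' (by fun_prop) ?_
  refine (ae_restrict_iff' measurableSet_Ioi).2 (Eventually.of_forall fun y hy => ?_)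
  have hy : 0 < y := hy
  have hg := gamDens_pos (n + 1) hr hy
  rw [Real.norm_of_nonneg (mul_nonneg (ell_nonneg ha hb _ _) hg.le)]
  have e1 := mul_gamDens (n + 1) hr y
  have e2 := inv_mul_gamDens n r hy
  push_cast at e1
  calc ell a b Ω y * gamDens (n + 1) r y
      ≤ (a * (y / Ω) + b * (Ω / y)) * gamDens (n + 1) r y := by
        gcongr; exact ell_le ha hb hΩ hy
    _ = a / Ω * (y * gamDens (n + 1) r y) + b * Ω * (y⁻¹ * gamDens (n + 1) r y) := by
        field_simp
    _ = _ := by rw [e1, e2]; simp only [Pi.add_apply]; ring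

lemma integral_lt_of_lt_on_Ioo {f g : ℝ → ℝ} {u v : ℝ} (hf : IntegrableOn f (Ioi 0))
    (hg : IntegrableOn g (Ioi 0)) (hle : ∀ y, 0 < y → f y ≤ g y) (hu : 0 ≤ u) (huv : u < v)
    (hlt : ∀ y ∈ Ioo u v, f y < g y) : ∫ y in Ioi 0, f y < ∫ y in Ioi 0, g y := by
  rw [← sub_pos, ← integral_sub hg hf]
  change 0 < ∫ y in Ioi 0, (g - f) y
  rw [setIntegral_pos_iff_support_of_nonneg_ae _ (hg.sub hf)]
  · have hsub : Ioo u v ⊆ Function.support (g - f) ∩ Ioi 0 := fun y hy =>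
      ⟨(sub_pos.2 (hlt y hy)).ne', hu.trans_lt hy.1⟩
    refine lt_of_lt_of_le ?_ (measure_mono hsub)
    simpa using huv
  · refine (ae_restrict_iff' measurableSet_Ioi).2 (Eventually.of_forall fun y hy => ?_)
    exact sub_nonneg.2 (hle y hy)

/-- If `S` is gamma with shape `n + 2` and scale `p`, then `E ℓ(S)` exceeds `ℓ(p (n + 2 + d))`
for every shift `-1 ≤ d ≤ 0`. Each branch of `ℓ` lies below `ℓ`, and is affine in `S` or in
`1 / S`, with `E S = p (n + 2)` and `E (1 / S) = 1 / (p (n + 1))`. -/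
lemma ell_lt_integral {a b Ω p d : ℝ} (ha : 0 ≤ a) (hb : 0 ≤ b) (hab : 0 < a + b) (hΩ : 0 < Ω)
    (hp : 0 < p) (hd : -1 ≤ d) (hd0 : d ≤ 0) (n : ℕ) :
    ell a b Ω (p * (n + 2 + d)) < ∫ y in Ioi 0, ell a b Ω y * gamDens (n + 1) p⁻¹ y := by
  have hr : 0 < p⁻¹ := inv_pos.2 hp
  have hn : (0 : ℝ) ≤ n := n.cast_nonneg
  have hI := integrableOn_ell_mul_gamDens ha hb hΩ hr n
  have h1 := integrableOn_gamDens (n + 1) hr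
  rcases le_or_gt Ω (p * (n + 2 + d)) with h | h
  · have h2 := integrableOn_gamDens (n + 2) hr
    have hm : ∀ y : ℝ, a * (y / Ω - 1) * gamDens (n + 1) p⁻¹ y =
        a / Ω * (p * (n + 2)) * gamDens (n + 2) p⁻¹ y - a * gamDens (n + 1) p⁻¹ y := by
      intro y
      have := mul_gamDens (n + 1) hr y
      push_cast at this
      have e : ((n : ℝ) + 1 + 1) / p⁻¹ = p * (n + 2) := by field_simp; ring
      rw [e] at this
      linear_combination a / Ω * this
    have hval : ∫ y in Ioi 0, a * (y / Ω - 1) * gamDens (n + 1) p⁻¹ y =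
        a / Ω * (p * (n + 2)) - a := by
      simp_rw [hm]
      rw [integral_sub (h2.const_mul _) (h1.const_mul _), integral_const_mul,
        integral_const_mul, integral_gamDens _ hr, integral_gamDens _ hr]
      ring
    have hint : IntegrableOn (fun y => a * (y / Ω - 1) * gamDens (n + 1) p⁻¹ y) (Ioi 0) := by
      simp_rw [hm]
      exact (h2.const_mul _).sub (h1.const_mul _)
    calc ell a b Ω (p * (n + 2 + d)) = a / Ω * (p * (n + 2 + d)) - a := by
          rw [ell_of_le hΩ h]; ring
      _ ≤ a / Ω * (p * (n + 2)) - a := by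
          have : p * (n + 2 + d) ≤ p * (n + 2) := by gcongr ?_ * ?_; linarith
          gcongr
      _ = _ := hval.symm
      _ < _ := by
        refine integral_lt_of_lt_on_Ioo (u := 0) (v := Ω) hint hI (fun y hy => ?_) le_rfl hΩ
          (fun y hy => ?_)
        · have := gamDens_pos (n + 1) hr hy
          gcongr
          rcases le_total Ω y with h' | h'
          · rw [ell_of_le hΩ h']
          · have : y / Ω ≤ 1 := by rw [div_le_one hΩ]; exact h'
            exact (mul_nonpos_of_nonneg_of_nonpos ha (by linarith)).trans (ell_nonneg ha hb _ _)
        · have := gamDens_pos (n + 1) hr hy.1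
          gcongr
          have t1 : y / Ω < 1 := by rw [div_lt_one hΩ]; exact hy.2
          have t2 : 1 < Ω / y := by rw [lt_div_iff₀ hy.1]; linarith [hy.2]
          rw [ell_of_ge hy.1 hy.2.le]
          rcases ha.eq_or_lt with h0 | h0
          · subst h0; nlinarith
          · nlinarith
  · have hz : 0 < p * (n + 2 + d) := mul_pos hp (by linarith)
    have h2 := integrableOn_gamDens n hr
    have hm : ∀ y ∈ Ioi (0 : ℝ), b * (Ω / y - 1) * gamDens (n + 1) p⁻¹ y =
        b * (Ω / (p * (n + 1))) * gamDens n p⁻¹ y - b * gamDens (n + 1) p⁻¹ y := by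
      intro y hy
      have := inv_mul_gamDens n p⁻¹ hy
      have e : p⁻¹ / ((n : ℝ) + 1) = 1 / (p * (n + 1)) := by field_simp
      rw [e] at this
      linear_combination b * Ω * this
    have hval : ∫ y in Ioi 0, b * (Ω / y - 1) * gamDens (n + 1) p⁻¹ y =
        b * (Ω / (p * (n + 1))) - b := by
      rw [setIntegral_congr_fun measurableSet_Ioi hm,
        integral_sub (h2.const_mul _) (h1.const_mul _), integral_const_mul,
        integral_const_mul, integral_gamDens _ hr, integral_gamDens _ hr]
      ring
    have hint : IntegrableOn (fun y => b * (Ω / y - 1) * gamDens (n + 1) p⁻¹ y) (Ioi 0) := by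
      rw [integrableOn_congr_fun hm measurableSet_Ioi]
      exact (h2.const_mul _).sub (h1.const_mul _)
    calc ell a b Ω (p * (n + 2 + d)) = b * (Ω / (p * (n + 2 + d))) - b := by
          rw [ell_of_ge hz h.le]; ring
      _ ≤ b * (Ω / (p * (n + 1))) - b := by 
          have : p * (n + 1) ≤ p * (n + 2 + d) := by gcongr ?_ * ?_; linarith
          gcongr
      _ = _ := hval.symm
      _ < _ := by
        refine integral_lt_of_lt_on_Ioo (u := Ω) (v := Ω + 1) hint hI (fun y hy => ?_) hΩ.le
          (by linarith) (fun y hy => ?_)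
        · have := gamDens_pos (n + 1) hr hy
          gcongr
          rcases le_total Ω y with h' | h'
          · have : Ω / y ≤ 1 := by rw [div_le_one hy]; exact h'
            exact (mul_nonpos_of_nonneg_of_nonpos hb (by linarith)).trans (ell_nonneg ha hb _ _)
          · rw [ell_of_ge hy h']
        · have hy0 : 0 < y := hΩ.trans hy.1
          have := gamDens_pos (n + 1) hr hy0
          gcongr
          have t1 : Ω / y < 1 := by rw [div_lt_one hy0]; exact hy.1
          have t2 : 1 < y / Ω := by rw [lt_div_iff₀ hΩ]; linarith [hy.1]
          rw [ell_of_le hΩ hy.1.le]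
          rcases ha.eq_or_lt with h0 | h0
          · subst h0; nlinarith
          · nlinarith

/-! ### The risk under the gamma limit law -/

lemma hasDerivAt_pow_mul_exp (m : ℕ) (y : ℝ) :
    HasDerivAt (fun y : ℝ => y ^ (m + 1) * exp (-y))
      ((m + 1) * (y ^ m * exp (-y)) - y ^ (m + 1) * exp (-y)) y := by
  have h := (hasDerivAt_pow (m + 1) y).mul (hasDerivAt_neg y).exp
  convert! h using 1
  push_cast
  ring

lemma tendsto_pow_mul_exp (m : ℕ) :
    Tendsto (fun y : ℝ => y ^ m * exp (-y)) atTop (nhds 0) :=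
  tendsto_pow_mul_exp_neg_atTop_nhds_zero m

/-- For `Ω` satisfying the optimality equation `hE`, the multiples of the incomplete gamma
function contributed by the two branches of `ℓ` cancel, and `E ℓ(Y)` has a closed form for `Y`
gamma distributed with shape `k + 2`. -/
lemma integral_ell_gamDens {a b Ω : ℝ} (ha : 0 ≤ a) (hb : 0 ≤ b) (hΩ : 0 < Ω) (k : ℕ)
    (hE : a * (Ω - (k + 2)) * (k + 1) + b * Ω * (Ω - (k + 1)) = 0) :
    ∫ y in Ioi 0, ell a b Ω y * gamDens (k + 1) 1 y =
      a * ((k + 2) / Ω - 1) +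
        (a * (k + 2) / Ω + b) * Ω ^ (k + 1) * exp (-Ω) / (k + 1).factorial := by
  have hC : (0 : ℝ) < (k + 1).factorial := by positivity
  have hk : (0 : ℝ) < k + 1 := by positivity
  have hI := integrableOn_ell_mul_gamDens ha hb hΩ one_pos k
  have hg := (integrableOn_gamDens (k + 1) one_pos).const_mul (a * ((k + 2) / Ω - 1))
  have hH : IntegrableOn (fun y => ell a b Ω y * gamDens (k + 1) 1 y -
      a * ((k + 2) / Ω - 1) * gamDens (k + 1) 1 y) (Ioi 0) := hI.sub hg
  have hcoef : a * ((k + 2) / Ω - 1) = b * (Ω / (k + 1) - 1) := by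
    field_simp
    linear_combination -hE
  have hsplit : ∫ y in Ioi 0, (ell a b Ω y * gamDens (k + 1) 1 y -
        a * ((k + 2) / Ω - 1) * gamDens (k + 1) 1 y) =
      b * Ω / (k + 1) / (k + 1).factorial * (Ω ^ (k + 1) * exp (-Ω)) +
        a / Ω / (k + 1).factorial * (Ω ^ (k + 2) * exp (-Ω)) := by
    rw [← Ioc_union_Ioi_eq_Ioi hΩ.le, setIntegral_union (Ioc_disjoint_Ioi le_rfl)
      measurableSet_Ioi (hH.mono_set Ioc_subset_Ioi_self) (hH.mono_set (Ioi_subset_Ioi hΩ.le))]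
    congr 1
    · have hder : ∀ y : ℝ, HasDerivAt
          (fun y : ℝ => b * Ω / (k + 1) / (k + 1).factorial * (y ^ (k + 1) * exp (-y)))
          (b * Ω / (k + 1) / (k + 1).factorial *
            ((k + 1) * (y ^ k * exp (-y)) - y ^ (k + 1) * exp (-y))) y := fun y =>
        (hasDerivAt_pow_mul_exp k y).const_mul _
      have hftc := intervalIntegral.integral_eq_sub_of_hasDerivAt (a := 0) (b := Ω)
        (fun y _ => hder y) (Continuous.intervalIntegrable (by fun_prop) _ _)
      rw [intervalIntegral.integral_of_le hΩ.le] at hftc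
      simp only [zero_pow (Nat.succ_ne_zero k), zero_mul, mul_zero, sub_zero] at hftc
      rw [← hftc]
      refine setIntegral_congr_fun measurableSet_Ioc fun y hy => ?_
      have hy0 : 0 < y := hy.1
      rw [ell_of_ge hy.1 hy.2, hcoef]
      simp only [gamDens, one_pow, one_mul]
      field_simp
      ring
    · have hder : ∀ y : ℝ, HasDerivAt
          (fun y : ℝ => -(a / Ω / (k + 1).factorial) * (y ^ (k + 1 + 1) * exp (-y)))
          (-(a / Ω / (k + 1).factorial) *
            ((((k + 1 : ℕ) : ℝ) + 1) * (y ^ (k + 1) * exp (-y)) - y ^ (k + 1 + 1) * exp (-y)))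
          y := fun y => (hasDerivAt_pow_mul_exp (k + 1) y).const_mul _
      have heq : ∀ y ∈ Ioi Ω, ell a b Ω y * gamDens (k + 1) 1 y -
          a * ((k + 2) / Ω - 1) * gamDens (k + 1) 1 y =
          -(a / Ω / (k + 1).factorial) *
            ((((k + 1 : ℕ) : ℝ) + 1) * (y ^ (k + 1) * exp (-y)) -
              y ^ (k + 1 + 1) * exp (-y)) := by
        intro y hy
        rw [ell_of_le hΩ (le_of_lt hy)]
        simp only [gamDens, one_pow, one_mul]
        push_cast
        field_simp
        ring
      have hint := (integrableOn_congr_fun heq measurableSet_Ioi).1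
        (hH.mono_set (Ioi_subset_Ioi hΩ.le))
      rw [setIntegral_congr_fun measurableSet_Ioi heq,
        integral_Ioi_of_hasDerivAt_of_tendsto' (fun y _ => hder y) hint
          ((tendsto_pow_mul_exp _).const_mul _)]
      ring
  rw [integral_sub hI hg, integral_const_mul, integral_gamDens _ one_pos] at hsplit
  have hfin : (a * (k + 2) / Ω + b) = a + b * Ω / (k + 1) := by
    field_simp at hcoef ⊢
    linear_combination hcoef
  rw [hfin]
  rw [sub_eq_iff_eq_add] at hsplit
  rw [hsplit, pow_succ Ω (k + 1)]
  field_simp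
  ring

/-! ### Negative binomial mixtures of gamma laws -/

lemma negBinomPMF_nonneg (ν : ℕ) {p : ℝ} (hp : p ∈ Ioo (0 : ℝ) 1) (n : ℕ) :
    0 ≤ negBinomPMF ν p n := by
  have h0 := hp.1.le
  have h1 : 0 ≤ 1 - p := by linarith [hp.2]
  unfold negBinomPMF; positivity

/-- A sum of `N` independent exponential variables of mean `p`, where `N` is negative binomial
with parameters `k + 2` and `p`, is gamma distributed with shape `k + 2` and unit rate. -/
lemma hasSum_mixture (k : ℕ) {p : ℝ} (hp : p ∈ Ioo (0 : ℝ) 1) (y : ℝ) :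
    HasSum (fun n : ℕ => if k + 2 ≤ n then negBinomPMF (k + 2) p n * gamDens (n - 1) p⁻¹ y else 0)
      (gamDens (k + 1) 1 y) := by
  have hp0 : p ≠ 0 := hp.1.ne'
  have hinj : Function.Injective (fun m : ℕ => m + (k + 2)) := add_left_injective _
  rw [← hinj.hasSum_iff]
  · have h := (NormedSpace.expSeries_div_hasSum_exp ((1 - p) * y * p⁻¹)).mul_left
      (y ^ (k + 1) / (k + 1).factorial * exp (-(p⁻¹ * y)))
    rw [← Real.exp_eq_exp_ℝ, mul_assoc _ (exp _) (exp _), ← Real.exp_add] at h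
    convert! h using 1
    · funext m
      have hf : ((m + k + 1).factorial : ℝ) =
          ((m + k + 1).choose (k + 1) : ℝ) * (k + 1).factorial * m.factorial := by
        have := Nat.add_choose_mul_factorial_mul_factorial m (k + 1)
        rw [← add_assoc] at this
        rw [← this]; push_cast; ring
      have hch : (0 : ℝ) < (m + k + 1).choose (k + 1) := by
        exact_mod_cast Nat.choose_pos (by omega)
      have hm : (0 : ℝ) < m.factorial := by positivity
      have hk : (0 : ℝ) < (k + 1).factorial := by positivity
      simp only [Function.comp, negBinomPMF, gamDens]
      rw [if_pos (by omega)]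
      have e1 : m + (k + 2) - 1 = m + k + 1 := by omega
      have e2 : k + 2 - 1 = k + 1 := by omega
      have e3 : m + (k + 2) - (k + 2) = m := by omega
      rw [e1, e2, e3, hf]
      rw [mul_pow, mul_pow, inv_pow, inv_pow]
      field_simp
      ring
    · unfold gamDens
      have : -(p⁻¹ * y) + (1 - p) * y * p⁻¹ = -(1 * y) := by field_simp; ring
      rw [this]; ring
  · intro n hn
    rw [if_neg]
    intro h
    exact hn ⟨n - (k + 2), by simp; omega⟩

/-- The expectation of `ℓ` under the unit-rate gamma law, expanded along the mixture. -/
lemma hasSum_integral_mixture {a b Ω p : ℝ} (ha : 0 ≤ a) (hb : 0 ≤ b) (hΩ : 0 < Ω)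
    (hp : p ∈ Ioo (0 : ℝ) 1) (k : ℕ) :
    HasSum (fun n : ℕ => if k + 2 ≤ n then negBinomPMF (k + 2) p n *
        ∫ y in Ioi 0, ell a b Ω y * gamDens (n - 1) p⁻¹ y else 0)
      (∫ y in Ioi 0, ell a b Ω y * gamDens (k + 1) 1 y) := by
  have hr : 0 < p⁻¹ := inv_pos.2 hp.1
  set F : ℕ → ℝ → ℝ := fun n y => ell a b Ω y *
    (if k + 2 ≤ n then negBinomPMF (k + 2) p n * gamDens (n - 1) p⁻¹ y else 0) with hF
  have hFs : ∀ y, HasSum (fun n => F n y) (ell a b Ω y * gamDens (k + 1) 1 y) := fun y =>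
    (hasSum_mixture k hp y).mul_left _
  have hF0 : ∀ n, ∀ y ∈ Ioi (0 : ℝ), 0 ≤ F n y := by
    intro n y hy
    refine mul_nonneg (ell_nonneg ha hb _ _) ?_
    split_ifs
    · exact mul_nonneg (negBinomPMF_nonneg _ hp _) (gamDens_pos _ hr hy).le
    · exact le_rfl
  have hFeq : ∀ n, (∫ y in Ioi 0, F n y) = if k + 2 ≤ n then negBinomPMF (k + 2) p n *
        ∫ y in Ioi 0, ell a b Ω y * gamDens (n - 1) p⁻¹ y else 0 := by
    intro n
    simp only [hF]
    split_ifs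
    · rw [← integral_const_mul]
      congr 1; funext y; ring
    · simp
  have hFint : ∀ n, IntegrableOn (F n) (Ioi 0) := by
    intro n
    simp only [hF]
    split_ifs with h
    · obtain ⟨m, rfl⟩ : ∃ m, n = m + 2 := ⟨n - 2, by omega⟩
      refine ((integrableOn_ell_mul_gamDens ha hb hΩ hr m).const_mul
        (negBinomPMF (k + 2) p (m + 2))).congr (Eventually.of_forall fun y => ?_)
      simp only [show m + 2 - 1 = m + 1 by omega]; ring
    · simp
  have hI := integrableOn_ell_mul_gamDens ha hb hΩ one_pos k
  have hsum : Summable fun n => ∫ y in Ioi 0, ‖F n y‖ := by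
    have hnorm : ∀ n, ∫ y in Ioi 0, ‖F n y‖ = ∫ y in Ioi 0, F n y := fun n =>
      setIntegral_congr_fun measurableSet_Ioi fun y hy => Real.norm_of_nonneg (hF0 n y hy)
    refine summable_of_sum_le (c := ∫ y in Ioi 0, ell a b Ω y * gamDens (k + 1) 1 y)
      (fun n => integral_nonneg fun y => norm_nonneg _) fun u => ?_
    simp_rw [hnorm]
    rw [← integral_finsetSum _ fun n _ => hFint n]
    refine setIntegral_mono_on (integrable_finsetSum _ fun n _ => hFint n) hI measurableSet_Ioi
      fun y hy => ?_
    exact sum_le_hasSum u (fun n _ => hF0 n y hy) (hFs y)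
  have h := hasSum_integral_of_summable_integral_norm hFint hsum
  simp_rw [hFeq, (hFs _).tsum_eq] at h
  exact h

lemma risk_eq_s1 {a b Ω p d : ℝ} (hΩ : 0 < Ω) (hp : 0 < p) (hd : -1 ≤ d) (k : ℕ) :
    risk (k + 2) (invLinLoss a b) (fun n => Ω / ((n : ℝ) + d)) p =
      ∑' n : ℕ, if k + 2 ≤ n then negBinomPMF (k + 2) p n * ell a b Ω (p * (n + d)) else 0 := by
  unfold risk
  congr 1; funext n
  split_ifs with h
  · have : (2 : ℝ) ≤ n := by exact_mod_cast (by omega : 2 ≤ n)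
    rw [div_div, mul_comm _ p, invLinLoss_eq_ell hΩ (mul_pos hp (by linarith))]
  · rfl

lemma term_le {a b Ω p d : ℝ} (ha : 0 ≤ a) (hb : 0 ≤ b) (hab : 0 < a + b) (hΩ : 0 < Ω)
    (hp : p ∈ Ioo (0 : ℝ) 1) (hd : -1 ≤ d) (hd0 : d ≤ 0) (k n : ℕ) :
    (if k + 2 ≤ n then negBinomPMF (k + 2) p n * ell a b Ω (p * (n + d)) else 0) ≤
      if k + 2 ≤ n then negBinomPMF (k + 2) p n *
        ∫ y in Ioi 0, ell a b Ω y * gamDens (n - 1) p⁻¹ y else 0 := by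
  split_ifs with h
  · refine mul_le_mul_of_nonneg_left ?_ (negBinomPMF_nonneg _ hp _)
    obtain ⟨m, rfl⟩ : ∃ m, n = m + 2 := ⟨n - 2, by omega⟩
    have := ell_lt_integral ha hb hab hΩ hp.1 hd hd0 m
    push_cast
    exact this.le
  · exact le_rfl

lemma term_nonneg {a b Ω p d : ℝ} (ha : 0 ≤ a) (hb : 0 ≤ b) (hp : p ∈ Ioo (0 : ℝ) 1)
    (k n : ℕ) :
    0 ≤ if k + 2 ≤ n then negBinomPMF (k + 2) p n * ell a b Ω (p * (n + d)) else 0 := by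
  split_ifs
  · exact mul_nonneg (negBinomPMF_nonneg _ hp _) (ell_nonneg ha hb _ _)
  · exact le_rfl

lemma summable_term {a b Ω p d : ℝ} (ha : 0 ≤ a) (hb : 0 ≤ b) (hab : 0 < a + b) (hΩ : 0 < Ω)
    (hp : p ∈ Ioo (0 : ℝ) 1) (hd : -1 ≤ d) (hd0 : d ≤ 0) (k : ℕ) :
    Summable fun n : ℕ =>
      if k + 2 ≤ n then negBinomPMF (k + 2) p n * ell a b Ω (p * (n + d)) else 0 :=
  .of_nonneg_of_le (term_nonneg ha hb hp k) (term_le ha hb hab hΩ hp hd hd0 k)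
    (hasSum_integral_mixture ha hb hΩ hp k).summable

lemma risk_lt {a b Ω p d : ℝ} (ha : 0 ≤ a) (hb : 0 ≤ b) (hab : 0 < a + b) (hΩ : 0 < Ω)
    (hp : p ∈ Ioo (0 : ℝ) 1) (hd : -1 ≤ d) (hd0 : d ≤ 0) (k : ℕ) :
    risk (k + 2) (invLinLoss a b) (fun n => Ω / ((n : ℝ) + d)) p <
      ∫ y in Ioi 0, ell a b Ω y * gamDens (k + 1) 1 y := by
  rw [risk_eq_s1 hΩ hp.1 hd]
  refine hasSum_lt (i := k + 2) (term_le ha hb hab hΩ hp hd hd0 k) ?_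
    (summable_term ha hb hab hΩ hp hd hd0 k).hasSum (hasSum_integral_mixture ha hb hΩ hp k)
  rw [if_pos le_rfl, if_pos le_rfl]
  have hpos : 0 < negBinomPMF (k + 2) p (k + 2) := by
    have := hp.1
    simp [negBinomPMF]; positivity
  refine mul_lt_mul_of_pos_left ?_ hpos
  have := ell_lt_integral ha hb hab hΩ hp.1 hd hd0 k
  push_cast
  exact this

/-! ### The limit as the success probability vanishes -/

lemma tendsto_floor_div {y : ℝ} (hy : 0 < y) :
    Tendsto (fun p : ℝ => ⌊y / p⌋₊) (nhdsWithin 0 (Ioi 0)) atTop := by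
  have h : Tendsto (fun p : ℝ => y / p) (nhdsWithin 0 (Ioi 0)) atTop := by
    simp_rw [div_eq_mul_inv]
    exact tendsto_inv_nhdsGT_zero.const_mul_atTop hy
  exact tendsto_nat_floor_atTop.comp h

lemma tendsto_mul_floor_div {y : ℝ} (hy : 0 < y) :
    Tendsto (fun p : ℝ => p * (⌊y / p⌋₊ : ℝ)) (nhdsWithin 0 (Ioi 0)) (nhds y) := by
  have h := (tendsto_nat_floor_mul_div_atTop hy.le).comp (tendsto_inv_nhdsGT_zero (𝕜 := ℝ))
  refine h.congr fun p => ?_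
  simp only [Function.comp, div_eq_mul_inv, inv_inv]
  ring

lemma tendsto_mul_floor_div_add {y : ℝ} (hy : 0 < y) (c : ℝ) :
    Tendsto (fun p : ℝ => p * ((⌊y / p⌋₊ : ℝ) + c)) (nhdsWithin 0 (Ioi 0)) (nhds y) := by
  have h0 : Tendsto (fun p : ℝ => p * c) (nhdsWithin 0 (Ioi 0)) (nhds 0) := by
    have : Tendsto (fun p : ℝ => p * c) (nhds 0) (nhds (0 * c)) := by
      exact (continuous_id.mul continuous_const).tendsto 0
    rw [zero_mul] at this
    exact this.mono_left nhdsWithin_le_nhds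
  have h := (tendsto_mul_floor_div hy).add h0
  rw [add_zero] at h
  exact h.congr fun p => by ring

lemma tendsto_log_one_sub_div :
    Tendsto (fun p : ℝ => p⁻¹ * log (1 - p)) (nhdsWithin 0 (Ioi 0)) (nhds (-1)) := by
  have h : HasDerivAt (fun t : ℝ => log (1 - t)) (-1) 0 := by
    have h1 : HasDerivAt (fun t : ℝ => 1 - t) (-1) 0 := by
      simpa using (hasDerivAt_id (0 : ℝ)).const_sub 1
    simpa using h1.log (by norm_num)
  simpa using h.tendsto_slope_zero_right

/-- Local limit theorem: `f_ν(⌊y / p⌋) / p` tends to the gamma density at `y`. -/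
lemma tendsto_negBinomPMF_div (k : ℕ) {y : ℝ} (hy : 0 < y) :
    Tendsto (fun p : ℝ => negBinomPMF (k + 2) p ⌊y / p⌋₊ / p) (nhdsWithin 0 (Ioi 0))
      (nhds (gamDens (k + 1) 1 y)) := by
  have hN := tendsto_floor_div hy
  have hM : Tendsto (fun p : ℝ => ⌊y / p⌋₊ - 1) (nhdsWithin 0 (Ioi 0)) atTop :=
    (tendsto_sub_atTop_nat 1).comp hN
  have hch : Tendsto (fun p : ℝ => ((⌊y / p⌋₊ - 1).choose (k + 1) : ℝ) * p ^ (k + 1))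
      (nhdsWithin 0 (Ioi 0)) (nhds (y ^ (k + 1) / (k + 1).factorial)) := by
    have hequiv := ((isEquivalent_choose (k + 1)).comp_tendsto hM).mul
      (Asymptotics.IsEquivalent.refl (u := fun p : ℝ => p ^ (k + 1)))
    refine hequiv.tendsto_nhds_iff.2 ?_
    have h := ((tendsto_mul_floor_div_add hy (-1)).pow (k + 1)).div_const
      ((k + 1).factorial : ℝ)
    refine h.congr' ?_
    filter_upwards [hN.eventually_ge_atTop 1] with p hp
    change _ = (((⌊y / p⌋₊ - 1 : ℕ) : ℝ) ^ (k + 1) / (k + 1).factorial) * p ^ (k + 1)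
    rw [Nat.cast_sub hp, mul_pow]
    push_cast
    ring
  have hexp : Tendsto (fun p : ℝ => (1 - p) ^ (⌊y / p⌋₊ - (k + 2))) (nhdsWithin 0 (Ioi 0))
      (nhds (exp (-y))) := by
    have h := (tendsto_log_one_sub_div.mul
      (tendsto_mul_floor_div_add hy (-((k : ℝ) + 2)))).rexp
    rw [neg_one_mul] at h
    refine h.congr' ?_
    filter_upwards [hN.eventually_ge_atTop (k + 2), Ioo_mem_nhdsGT (zero_lt_one' ℝ)] with p hp hp1
    have h1 : 0 < 1 - p := by linarith [hp1.2]
    have hp0 : p ≠ 0 := hp1.1.ne'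
    rw [← Real.exp_log (pow_pos h1 _), Real.log_pow, Nat.cast_sub hp]
    congr 1
    push_cast
    field_simp
    ring
  have h := hch.mul hexp
  have hval : y ^ (k + 1) / (k + 1).factorial * exp (-y) = gamDens (k + 1) 1 y := by
    simp only [gamDens, one_pow, one_mul]; ring
  rw [hval] at h
  refine h.congr' ?_
  filter_upwards [self_mem_nhdsWithin] with p hp
  have hp0 : p ≠ 0 := (mem_Ioi.1 hp).ne'
  simp only [negBinomPMF, show k + 2 - 1 = k + 1 by omega]
  field_simp
  ring

/-- A sum over `n` dominates the integral of the corresponding step function of mesh `p`. -/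
lemma lintegral_floor_le {p : ℝ} (hp : 0 < p) (w : ℕ → ℝ) :
    ∫⁻ y in Ioi (0 : ℝ), ENNReal.ofReal (w ⌊y / p⌋₊ / p) ≤ ∑' n, ENNReal.ofReal (w n) := by
  have hT : Measurable fun y : ℝ => ⌊y / p⌋₊ := Nat.measurable_floor.comp (by fun_prop)
  have hφ : Measurable fun n : ℕ => ENNReal.ofReal (w n / p) := measurable_of_countable _
  rw [← lintegral_map (f := fun n : ℕ => ENNReal.ofReal (w n / p)) hφ hT, lintegral_countable']
  refine ENNReal.tsum_le_tsum fun n => ?_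
  have hmeas : (volume.restrict (Ioi (0 : ℝ))).map (fun y : ℝ => ⌊y / p⌋₊) {n} ≤
      ENNReal.ofReal p := by
    rw [Measure.map_apply hT (measurableSet_singleton n),
      Measure.restrict_apply (hT (measurableSet_singleton n))]
    have hsub : (fun y : ℝ => ⌊y / p⌋₊) ⁻¹' {n} ∩ Ioi 0 ⊆ Icc (n * p) (n * p + p) := by
      rintro y ⟨hy, hy0⟩
      have hy0 : 0 < y := hy0
      have h := (Nat.floor_eq_iff (by positivity)).1 (mem_singleton_iff.1 hy)
      rw [le_div_iff₀ hp, div_lt_iff₀ hp] at h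
      exact ⟨h.1, by linarith [h.2]⟩
    refine (measure_mono hsub).trans ?_
    simp
  calc ENNReal.ofReal (w n / p) * _ ≤ ENNReal.ofReal (w n / p) * ENNReal.ofReal p := by gcongr
    _ = ENNReal.ofReal (w n) := by
      rw [← ENNReal.ofReal_mul' hp.le, div_mul_cancel₀ _ hp.ne']

/-- The lower bound is Fatou's lemma applied to step functions; the upper bound is `risk_lt`. -/
lemma tendsto_risk {a b Ω d : ℝ} (ha : 0 ≤ a) (hb : 0 ≤ b) (hab : 0 < a + b) (hΩ : 0 < Ω)
    (hd : -1 ≤ d) (hd0 : d ≤ 0) (k : ℕ) :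
    Tendsto (risk (k + 2) (invLinLoss a b) (fun n => Ω / ((n : ℝ) + d)))
      (nhdsWithin 0 (Ioi 0)) (nhds (∫ y in Ioi 0, ell a b Ω y * gamDens (k + 1) 1 y)) := by
  set I := ∫ y in Ioi 0, ell a b Ω y * gamDens (k + 1) 1 y with hI
  set w : ℝ → ℕ → ℝ := fun p n =>
    if k + 2 ≤ n then negBinomPMF (k + 2) p n * ell a b Ω (p * (n + d)) else 0 with hw
  have hev : ∀ᶠ p : ℝ in nhdsWithin 0 (Ioi 0), p ∈ Ioo (0 : ℝ) 1 :=
    Ioo_mem_nhdsGT (zero_lt_one' ℝ)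
  have hpt : ∀ y ∈ Ioi (0 : ℝ), Tendsto (fun p => ENNReal.ofReal (w p ⌊y / p⌋₊ / p))
      (nhdsWithin 0 (Ioi 0)) (nhds (ENNReal.ofReal (ell a b Ω y * gamDens (k + 1) 1 y))) := by
    intro y hy
    refine ENNReal.tendsto_ofReal ?_
    have h := ((continuousAt_ell a b Ω hy).tendsto.comp (tendsto_mul_floor_div_add hy d)).mul
      (tendsto_negBinomPMF_div k hy)
    refine h.congr' ?_
    filter_upwards [(tendsto_floor_div hy).eventually_ge_atTop (k + 2)] with p hp
    simp only [hw, Function.comp]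
    rw [if_pos hp]
    ring
  have hmeas : ∀ p : ℝ, Measurable fun y : ℝ => ENNReal.ofReal (w p ⌊y / p⌋₊ / p) := by
    intro p
    have hφ : Measurable fun n : ℕ => ENNReal.ofReal (w p n / p) := measurable_of_countable _
    have hT : Measurable fun y : ℝ => ⌊y / p⌋₊ := Nat.measurable_floor.comp (by fun_prop)
    exact hφ.comp hT
  have hfatou : ENNReal.ofReal I ≤ liminf (fun p : ℝ => ENNReal.ofReal
      (risk (k + 2) (invLinLoss a b) (fun n => Ω / ((n : ℝ) + d)) p))
      (nhdsWithin 0 (Ioi 0)) := by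
    calc ENNReal.ofReal I
        = ∫⁻ y in Ioi (0 : ℝ), ENNReal.ofReal (ell a b Ω y * gamDens (k + 1) 1 y) := by
          refine ofReal_integral_eq_lintegral_ofReal
            (integrableOn_ell_mul_gamDens ha hb hΩ one_pos k) ?_
          refine (ae_restrict_iff' measurableSet_Ioi).2 (Eventually.of_forall fun y hy => ?_)
          exact mul_nonneg (ell_nonneg ha hb _ _) (gamDens_pos _ one_pos hy).le
      _ = ∫⁻ y in Ioi (0 : ℝ), liminf (fun p => ENNReal.ofReal (w p ⌊y / p⌋₊ / p))
            (nhdsWithin 0 (Ioi 0)) :=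
          setLIntegral_congr_fun measurableSet_Ioi fun y hy => (hpt y hy).liminf_eq.symm
      _ ≤ liminf (fun p => ∫⁻ y in Ioi (0 : ℝ), ENNReal.ofReal (w p ⌊y / p⌋₊ / p))
            (nhdsWithin 0 (Ioi 0)) := lintegral_liminf_le hmeas
      _ ≤ _ := by
          refine liminf_le_liminf ?_
          filter_upwards [hev] with p hp
          rw [risk_eq_s1 hΩ hp.1 hd, ENNReal.ofReal_tsum_of_nonneg (term_nonneg ha hb hp k)
            (summable_term ha hb hab hΩ hp hd hd0 k)]
          exact lintegral_floor_le hp.1 (w p)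
  refine tendsto_order.2 ⟨fun c hc => ?_, fun c hc => ?_⟩
  · rcases lt_or_ge c 0 with h0 | h0
    · filter_upwards [hev] with p hp
      rw [risk_eq_s1 hΩ hp.1 hd]
      exact h0.trans_le (tsum_nonneg (term_nonneg ha hb hp k))
    · have hlt : ENNReal.ofReal c < ENNReal.ofReal I :=
        (ENNReal.ofReal_lt_ofReal_iff (h0.trans_lt hc)).2 hc
      filter_upwards [eventually_lt_of_lt_liminf (hlt.trans_le hfatou)] with p hp
      exact (ENNReal.ofReal_lt_ofReal_iff_of_nonneg h0).1 hp
  · filter_upwards [hev] with p hp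
    exact (risk_lt ha hb hab hΩ hp hd hd0 k).trans hc

/-! ### The value of `Ω` -/

/-- `Ω` is at least `ν - 1` and solves the quadratic optimality equation. -/
lemma OmegaIL_spec {a b : ℝ} (ha : 0 ≤ a) (hb : 0 ≤ b) (hab : 0 < a + b) (k : ℕ) :
    (k : ℝ) + 1 ≤ OmegaIL (k + 2) a b ∧
      a * (OmegaIL (k + 2) a b - (k + 2)) * (k + 1) +
        b * OmegaIL (k + 2) a b * (OmegaIL (k + 2) a b - (k + 1)) = 0 := by
  have hk : (0 : ℝ) < k + 1 := by positivity
  unfold OmegaIL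
  push_cast
  have e : (k : ℝ) + 2 - 1 = k + 1 := by ring
  rw [e]
  split_ifs with h h'
  · obtain ⟨ha', hb'⟩ := h
    set s := √(1 + 4 * a * b / (((k : ℝ) + 1) * (a + b) ^ 2)) with hs
    have hfrac : 0 ≤ 4 * a * b / (((k : ℝ) + 1) * (a + b) ^ 2) := by positivity
    have hs2 : s ^ 2 = 1 + 4 * a * b / (((k : ℝ) + 1) * (a + b) ^ 2) :=
      Real.sq_sqrt (by linarith)
    have hs1 : 1 ≤ s := by rw [hs]; exact Real.one_le_sqrt.2 (by linarith)
    constructor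
    · have : 0 ≤ (a + b) / (2 * b) * (s - 1) :=
        mul_nonneg (by positivity) (by linarith)
      nlinarith
    -- clearing denominators leaves `(k + 1)` times the defining equation of `s ^ 2`
    · field_simp at hs2
      field_simp
      linear_combination (k + 1) * hs2
  · subst h'
    exact ⟨le_rfl, by ring⟩
  · have ha' : 0 < a := lt_of_le_of_ne ha (Ne.symm h')
    have hb' : b = 0 := by
      by_contra hne
      exact h ⟨ha', lt_of_le_of_ne hb (Ne.symm hne)⟩
    subst hb'
    exact ⟨by linarith, by ring⟩

theorem stmt1 (ν : ℕ) (hν : 2 ≤ ν) (a b : ℝ) (ha : 0 ≤ a) (hb : 0 ≤ b)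
    (hab : (a, b) ≠ (0, 0)) (d : ℝ) (hd : d ∈ Set.Icc (OmegaIL ν a b - ν) 0) :
    (∀ p ∈ Set.Ioo (0 : ℝ) 1,
        risk ν (invLinLoss a b) (fun n => OmegaIL ν a b / ((n : ℝ) + d)) p <
          a * ((ν : ℝ) / OmegaIL ν a b - 1) +
            (a * (ν : ℝ) / OmegaIL ν a b + b) * (OmegaIL ν a b) ^ (ν - 1) *
              Real.exp (-(OmegaIL ν a b)) / (Nat.factorial (ν - 1))) ∧
      Filter.Tendsto (risk ν (invLinLoss a b) (fun n => OmegaIL ν a b / ((n : ℝ) + d)))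
        (nhdsWithin 0 (Set.Ioi 0))
        (nhds (a * ((ν : ℝ) / OmegaIL ν a b - 1) +
          (a * (ν : ℝ) / OmegaIL ν a b + b) * (OmegaIL ν a b) ^ (ν - 1) *
            Real.exp (-(OmegaIL ν a b)) / (Nat.factorial (ν - 1)))) := by
  obtain ⟨k, rfl⟩ : ∃ k, ν = k + 2 := ⟨ν - 2, by omega⟩
  have hab' : 0 < a + b := by
    rcases ha.eq_or_lt with h | h
    · rcases hb.eq_or_lt with h' | h'
      · exact absurd (by rw [← h, ← h']) hab
      · linarith
    · linarith
  obtain ⟨hΩk, hE⟩ := OmegaIL_spec ha hb hab' k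
  have hk : (0 : ℝ) ≤ k := k.cast_nonneg
  have hΩ : 0 < OmegaIL (k + 2) a b := by linarith
  have hd1 : -1 ≤ d := by
    have := hd.1
    push_cast at this
    linarith
  have hval := integral_ell_gamDens ha hb hΩ k hE
  have e2 : k + 2 - 1 = k + 1 := by omega
  have ec : ((k + 2 : ℕ) : ℝ) = (k : ℝ) + 2 := by push_cast; ring
  rw [e2, ec, ← hval]
  exact ⟨fun p hp => risk_lt ha hb hab' hΩ hp hd1 hd.2 k,
    tendsto_risk ha hb hab' hΩ hd1 hd.2 k⟩
end

section
/- For every integer ν ≥ 2 and all a, b > 0, the value Ω_il = (ν−1)(1 + ((a+b)/(2b))(√(1 + 4ab/((ν−1)(a+b)²)) − 1)) satisfies ν−1 < Ω_il < ν. -/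
open Real

/-! Put `m = ν - 1 > 0` and `x = 4ab / (m (a+b)²) > 0`. The lower bound is `1 < √(1 + x)`. For the
upper bound, `√(1 + x) < 1 + x / 2` makes the excess over `m` less than
`m · (a+b)/(2b) · x/2 = a / (a+b) < 1`. -/

theorem stmt2 (ν : ℕ) (hν : 2 ≤ ν) (a b : ℝ) (ha : 0 < a) (hb : 0 < b) :
    (ν : ℝ) - 1 <
        ((ν : ℝ) - 1) *
          (1 + (a + b) / (2 * b) *
            (Real.sqrt (1 + 4 * a * b / (((ν : ℝ) - 1) * (a + b) ^ 2)) - 1)) ∧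
      ((ν : ℝ) - 1) *
          (1 + (a + b) / (2 * b) *
            (Real.sqrt (1 + 4 * a * b / (((ν : ℝ) - 1) * (a + b) ^ 2)) - 1)) <
        (ν : ℝ) := by
  have hm : (0 : ℝ) < (ν : ℝ) - 1 := by
    have : (2 : ℝ) ≤ (ν : ℝ) := by exact_mod_cast hν
    linarith
  obtain ⟨m, hm_def⟩ : ∃ m : ℝ, m = (ν : ℝ) - 1 := ⟨_, rfl⟩
  have hν_eq : (ν : ℝ) = m + 1 := by linarith
  rw [← hm_def] at hm ⊢
  rw [hν_eq]
  obtain ⟨x, hx_def⟩ : ∃ x : ℝ, x = 4 * a * b / (m * (a + b) ^ 2) := ⟨_, rfl⟩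
  have hx : 0 < x := by rw [hx_def]; positivity
  have hlow : 1 < Real.sqrt (1 + x) := by
    rw [Real.lt_sqrt (by norm_num)]
    linarith
  have hupp : Real.sqrt (1 + x) < 1 + x / 2 := by
    rw [Real.sqrt_lt' (by positivity)]
    nlinarith [sq_pos_of_pos hx]
  have hc : 0 < m * ((a + b) / (2 * b)) := by positivity
  have hlead : m * ((a + b) / (2 * b)) * (x / 2) = a / (a + b) := by
    rw [hx_def]
    field_simp
    norm_num
  have hfrac : a / (a + b) < 1 := by
    rw [div_lt_one (by positivity)]
    linarith
  rw [← hx_def]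
  constructor
  · linarith [mul_pos hc (sub_pos.mpr hlow)]
  · linarith [mul_pos hc (sub_pos.mpr hupp)]
end

section
/- Let ν ≥ 2 be an integer and a, b ≥ 0 with (a,b) ≠ (0,0). The equation aν/Ω − bΩ/(ν−1) = a − b has exactly one solution Ω > 0, namely Ω = (ν−1)(1 + ((a+b)/(2b))(√(1 + 4ab/((ν−1)(a+b)²)) − 1)) if a,b > 0; Ω = ν−1 if a = 0, b > 0; and Ω = ν if b = 0, a > 0. -/
/-!
Write `m = ν - 1 > 0`. For `x > 0`, clearing denominators turns the equation into
`b x² + (a - b) m x = a m (m + 1)` (`eq_iff_quadratic`). The constant term is non-positive, so two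
positive roots `x, y` satisfy `(x - y) (b x y + a m (m + 1)) = 0` and coincide. Existence: the
substitution `x = m (1 + t)` gives `b m t² + (a + b) m t = a`, whose positive root is
the one in the definition of `OmegaIL`; the degenerate cases are linear.
-/

open Real

lemma eq_iff_quadratic {n a b x : ℝ} (hn : 0 < n - 1) (hx : 0 < x) :
    a * n / x - b * x / (n - 1) = a - b ↔
      b * x ^ 2 + (a - b) * (n - 1) * x = a * (n - 1) * n := by
  rw [div_sub_div _ _ hx.ne' hn.ne', div_eq_iff (by positivity)]
  constructor <;> intro h <;> linarith

lemma quadratic_unique {n a b x y : ℝ} (hn : 0 < n - 1) (ha : 0 ≤ a) (hb : 0 ≤ b)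
    (hab : 0 < a + b) (hx : 0 < x) (hy : 0 < y)
    (h₁ : b * x ^ 2 + (a - b) * (n - 1) * x = a * (n - 1) * n)
    (h₂ : b * y ^ 2 + (a - b) * (n - 1) * y = a * (n - 1) * n) : x = y := by
  have hn' : 0 < n := by linarith
  have hxy : 0 < x * y := by positivity
  have hc : 0 < (n - 1) * n := by positivity
  have hpos : 0 < b * (x * y) + a * ((n - 1) * n) := by
    rcases ha.eq_or_lt with rfl | ha'
    · have hb' : 0 < b := by linarith
      positivity
    · positivity
  have h : (x - y) * (b * (x * y) + a * ((n - 1) * n)) = 0 := by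
    linear_combination y * h₁ - x * h₂
  rcases mul_eq_zero.mp h with h | h
  · linarith
  · exact absurd h hpos.ne'

/-- The proposed value is positive and solves the equation with denominators cleared. -/
lemma omegaIL_spec {ν : ℕ} {a b : ℝ} (hn : 0 < (ν : ℝ) - 1) (ha : 0 ≤ a) (hb : 0 ≤ b)
    (hab : 0 < a + b) :
    0 < OmegaIL ν a b ∧
      b * OmegaIL ν a b ^ 2 + (a - b) * ((ν : ℝ) - 1) * OmegaIL ν a b =
        a * ((ν : ℝ) - 1) * ν := by
  unfold OmegaIL
  split_ifs with h h0
  · obtain ⟨ha', hb'⟩ := h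
    generalize hm : (ν : ℝ) - 1 = m at *
    have hν : (ν : ℝ) = m + 1 := by linarith
    have hd : 0 < 4 * a * b / (m * (a + b) ^ 2) := by positivity
    have hs : √(1 + 4 * a * b / (m * (a + b) ^ 2)) ^ 2 = 1 + 4 * a * b / (m * (a + b) ^ 2) :=
      Real.sq_sqrt (by linarith)
    have hs1 : 1 < √(1 + 4 * a * b / (m * (a + b) ^ 2)) := by
      rw [Real.lt_sqrt zero_le_one]
      linarith
    generalize √(1 + 4 * a * b / (m * (a + b) ^ 2)) = s at *
    have hs2 : m * (a + b) ^ 2 * (s ^ 2 - 1) = 4 * a * b := by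
      rw [hs]
      field_simp
      ring
    have hs3 : 0 < s - 1 := by linarith
    refine ⟨by positivity, ?_⟩
    rw [hν]
    field_simp
    linear_combination hs2
  · subst h0
    exact ⟨hn, by ring⟩
  · have hb0 : b = 0 := by
      by_contra hb0
      exact h ⟨ha.lt_of_ne' h0, hb.lt_of_ne' hb0⟩
    subst hb0
    exact ⟨by linarith, by ring⟩

theorem stmt3 (ν : ℕ) (hν : 2 ≤ ν) (a b : ℝ) (ha : 0 ≤ a) (hb : 0 ≤ b)
    (hab : (a, b) ≠ (0, 0)) :
    0 < OmegaIL ν a b ∧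
      a * (ν : ℝ) / OmegaIL ν a b - b * OmegaIL ν a b / ((ν : ℝ) - 1) = a - b ∧
      ∀ Ω : ℝ, 0 < Ω → a * (ν : ℝ) / Ω - b * Ω / ((ν : ℝ) - 1) = a - b →
        Ω = OmegaIL ν a b := by
  have hn : 0 < (ν : ℝ) - 1 := by
    have : (2 : ℝ) ≤ ν := by exact_mod_cast hν
    linarith
  have hab' : 0 < a + b := by
    refine (add_nonneg ha hb).lt_of_ne' fun h => hab ?_
    rw [Prod.mk.injEq]
    constructor <;> linarith
  obtain ⟨hpos, hquad⟩ := omegaIL_spec hn ha hb hab'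
  exact ⟨hpos, (eq_iff_quadratic hn hpos).2 hquad, fun Ω hΩ h =>
    quadratic_unique hn ha hb hab' hΩ hpos ((eq_iff_quadratic hn hΩ).1 h) hquad⟩
end

section
/- Let ν ≥ 2 be an integer, let L be the normalized linear-linear loss with parameters a, b ≥ 0, (a,b) ≠ (0,0), and consider the estimator p̂ = Ω/(N+d) with Ω > 0 and d > −ν. Then lim_{p→0⁺} R(p) = (a+b)Ω γ(ν−1, Ω)/(ν−1) − (a+b) γ(ν, Ω) + a(1 − Ω/(ν−1)). -/
/-!
As `p → 0⁺`, the variable `p N` converges in law to a Gamma variable of shape `ν`. Concretely, write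
`ν = k + 2` and `n = m + ν`. The risk is a series over `m`, and it equals the integral over
`x ∈ [0, ∞)` of the step function `scaledTerm` obtained by setting `m = ⌊x / p⌋` and dividing the
`m`-th term by `p` (`risk_eq_integral`). For fixed `x > 0` that step function tends to
`x ^ (k + 1) / (k + 1)! * exp (-x) * L (Ω / x)` (`tendsto_scaledTerm`).

The passage to the limit under the integral is by dominated convergence. The delicate point is the
factor `Ω / (p (m + ν + d))` in the loss, which is of order `1 / x` near `x = 0`; it is compensated by
one factor `p (m + 1)` of the binomial coefficient (`choose_le`), which gives a majorant of the form
polynomial times `exp (-x)` (`norm_scaledTerm_le`). The limiting integral is evaluated by splitting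
the loss as `L (Ω / x) = a (1 - Ω / x) + (a + b) (Ω / x - 1) 1_{x ≤ Ω}` (`integral_limit`).
-/

open Real Filter Set

/-- Normalized lower incomplete gamma function. -/
noncomputable def lowerGamma (t u : ℝ) : ℝ :=
  (∫ s in (0:ℝ)..u, s ^ (t - 1) * Real.exp (-s)) / Real.Gamma t

open MeasureTheory Topology

/-- The summand of the risk with `ν = k + 2` and `n = m + ν`, at `m = ⌊x / p⌋`, divided by `p`. -/
noncomputable def scaledTerm (k : ℕ) (a b Ω d p x : ℝ) : ℝ :=
  ((⌊x / p⌋₊ + k + 1).choose (k + 1) : ℝ) * p ^ (k + 1) * (1 - p) ^ ⌊x / p⌋₊ *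
    linLinLoss a b (Ω / ((⌊x / p⌋₊ : ℝ) + (k + 2) + d) / p)

lemma linLinLoss_continuous (a b : ℝ) : Continuous (linLinLoss a b) := by
  unfold linLinLoss
  refine Continuous.if_le (by fun_prop) (by fun_prop) (by fun_prop) (by fun_prop) ?_
  intro x hx
  simp [hx]

lemma abs_linLinLoss_le {a b x : ℝ} (ha : 0 ≤ a) (hb : 0 ≤ b) (hx : 0 ≤ x) :
    |linLinLoss a b x| ≤ (a + b) * (1 + x) := by
  unfold linLinLoss
  have h1 := mul_nonneg ha hx
  have h2 := mul_nonneg hb hx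
  split_ifs with h
  · rw [abs_of_nonneg (mul_nonneg ha (by linarith))]; nlinarith
  · rw [abs_of_nonneg (mul_nonneg hb (by linarith))]; nlinarith

lemma choose_le (m k : ℕ) : (m + k + 1).choose (k + 1) ≤ (m + 1) * (m + k + 1) ^ k := by
  have h := Nat.add_one_mul_choose_eq (m + k) k
  have h2 : (m + k).choose k ≤ (m + k + 1) ^ k :=
    (Nat.choose_le_pow _ _).trans (Nat.pow_le_pow_left (by omega) _)
  have h3 : m + k + 1 ≤ (k + 1) * (m + 1) := by nlinarith [Nat.zero_le (k * m)]
  refine le_trans ?_ (Nat.mul_le_mul_left (m + 1) h2)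
  refine Nat.le_of_mul_le_mul_right (c := k + 1) ?_ (by omega)
  rw [← h]
  calc (m + k + 1) * (m + k).choose k ≤ ((k + 1) * (m + 1)) * (m + k).choose k :=
        Nat.mul_le_mul_right _ h3
    _ = _ := by ring

/-! ### From the series to an integral -/

/-- A series as the integral of a step function with steps of length `p`. -/
lemma integral_floor_eq_tsum {p : ℝ} (hp : 0 < p) (f : ℕ → ℝ)
    (hf : IntegrableOn (fun x => f ⌊x / p⌋₊) (Ici (0 : ℝ))) :
    ∫ x in Ici (0 : ℝ), f ⌊x / p⌋₊ = ∑' m, p * f m := by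
  have hmem : ∀ (m : ℕ) (x : ℝ), x ∈ Ico (p * m) (p * (m + 1)) ↔ 0 ≤ x ∧ ⌊x / p⌋₊ = m := by
    intro m x
    constructor
    · rintro ⟨h1, h2⟩
      have h0 : 0 ≤ x := le_trans (by positivity) h1
      refine ⟨h0, (Nat.floor_eq_iff (by positivity)).2 ⟨?_, ?_⟩⟩
      · rw [le_div_iff₀ hp]; linarith
      · rw [div_lt_iff₀ hp]; linarith
    · rintro ⟨h0, h⟩
      obtain ⟨h1, h2⟩ := (Nat.floor_eq_iff (by positivity)).1 h
      rw [le_div_iff₀ hp] at h1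
      rw [div_lt_iff₀ hp] at h2
      exact ⟨by linarith, by linarith⟩
  have hU : Ici (0 : ℝ) = ⋃ m : ℕ, Ico (p * m) (p * (m + 1)) := by
    ext x
    simp only [mem_iUnion, hmem]
    simp
  rw [hU] at hf ⊢
  rw [integral_iUnion (fun _ => measurableSet_Ico) ?_ hf]
  · congr 1
    ext m
    rw [setIntegral_congr_fun (g := fun _ => f m) measurableSet_Ico
      (fun x hx => by simp only [((hmem m x).1 hx).2])]
    have : p * ((m : ℝ) + 1) - p * m = p := by ring
    simp [this, hp.le]
  · intro i j hij
    rw [Function.onFun, Set.disjoint_left]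
    intro x hi hj
    exact hij (((hmem i x).1 hi).2.symm.trans ((hmem j x).1 hj).2)

lemma measurable_scaledTerm (k : ℕ) (a b Ω d p : ℝ) :
    Measurable (scaledTerm k a b Ω d p) := by
  have h : Measurable (fun x : ℝ => ⌊x / p⌋₊) := Nat.measurable_floor.comp (by fun_prop)
  exact (measurable_from_nat (f := fun m : ℕ => ((m + k + 1).choose (k + 1) : ℝ) * p ^ (k + 1) *
    (1 - p) ^ m * linLinLoss a b (Ω / ((m : ℝ) + (k + 2) + d) / p))).comp h

lemma risk_eq_integral (k : ℕ) (a b Ω d : ℝ) {p : ℝ} (hp : 0 < p)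
    (hi : IntegrableOn (scaledTerm k a b Ω d p) (Ici 0)) :
    risk (k + 2) (linLinLoss a b) (fun n => Ω / ((n : ℝ) + d)) p =
      ∫ x in Ici (0 : ℝ), scaledTerm k a b Ω d p x := by
  have h := integral_floor_eq_tsum hp (fun m : ℕ => ((m + k + 1).choose (k + 1) : ℝ) * p ^ (k + 1) *
    (1 - p) ^ m * linLinLoss a b (Ω / ((m : ℝ) + (k + 2) + d) / p)) hi
  refine Eq.trans ?_ h.symm
  unfold risk
  rw [← Function.Injective.tsum_eq (add_left_injective (k + 2))]
  · refine tsum_congr fun m => ?_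
    have e1 : m + (k + 2) - 1 = m + k + 1 := by omega
    simp only [negBinomPMF, e1, le_add_iff_nonneg_left, zero_le, if_true, Nat.add_sub_cancel,
      Nat.cast_add, Nat.cast_ofNat]
    rw [show k + 2 - 1 = k + 1 by omega]
    ring
  · intro n hn
    have : k + 2 ≤ n := by
      by_contra hc
      simp [hc] at hn
    exact ⟨n - (k + 2), by simp; omega⟩

/-! ### Domination -/

/-- The majorant of `scaledTerm`; the constant `c` satisfies `c (m + 1) ≤ m + ν + d` for all `m`. -/
lemma norm_scaledTerm_le (k : ℕ) {a b Ω d c p x : ℝ} (ha : 0 ≤ a) (hb : 0 ≤ b) (hΩ : 0 < Ω)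
    (hc : 0 < c) (hc1 : c ≤ 1) (hcd : c ≤ k + 2 + d) (hp : 0 < p) (hp1 : p < 1) (hx : 0 ≤ x) :
    ‖scaledTerm k a b Ω d p x‖ ≤
      (a + b) * (x + 1 + Ω / c) * (x + k + 1) ^ k * (exp 1 * exp (-x)) := by
  unfold scaledTerm
  set m := ⌊x / p⌋₊ with hm
  have h1 : p * m ≤ x := by
    have := Nat.floor_le (a := x / p) (by positivity)
    rw [le_div_iff₀ hp] at this
    linarith
  have h2 : x < p * (m + 1) := by
    have := Nat.lt_floor_add_one (x / p)
    rw [div_lt_iff₀ hp] at this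
    linarith
  have hm0 : (0 : ℝ) ≤ m := Nat.cast_nonneg m
  have hk0 : (0 : ℝ) ≤ k := Nat.cast_nonneg k
  have hch : ((m + k + 1).choose (k + 1) : ℝ) ≤ (m + 1) * ((m : ℝ) + k + 1) ^ k := by
    exact_mod_cast choose_le m k
  have hpow : (1 - p) ^ m ≤ exp 1 * exp (-x) := by
    calc (1 - p) ^ m ≤ (exp (-p)) ^ m :=
          pow_le_pow_left₀ (by linarith) (one_sub_le_exp_neg p) m
      _ = exp (-(p * m)) := by rw [← exp_nat_mul]; ring_nf
      _ ≤ exp (1 + -x) := exp_le_exp.2 (by nlinarith)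
      _ = _ := exp_add _ _
  have hden : c * (m + 1) ≤ (m : ℝ) + (k + 2) + d := by nlinarith
  have hden0 : 0 < c * ((m : ℝ) + 1) := by positivity
  have hy : Ω / ((m : ℝ) + (k + 2) + d) / p ≤ Ω / (c * (m + 1)) / p := by gcongr
  have hy0 : 0 ≤ Ω / ((m : ℝ) + (k + 2) + d) / p := by
    have := hden0.trans_le hden
    positivity
  have hL := abs_linLinLoss_le ha hb hy0
  have hL2 : |linLinLoss a b (Ω / ((m : ℝ) + (k + 2) + d) / p)| ≤
      (a + b) * (1 + Ω / (c * (m + 1)) / p) := hL.trans (by gcongr)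
  have hq : 0 ≤ 1 - p := by linarith
  rw [norm_mul, norm_mul, norm_mul, norm_eq_abs, norm_eq_abs, norm_eq_abs, norm_eq_abs,
    Nat.abs_cast, abs_of_nonneg (pow_nonneg hp.le _), abs_of_nonneg (pow_nonneg hq _)]
  calc ((m + k + 1).choose (k + 1) : ℝ) * p ^ (k + 1) * (1 - p) ^ m *
        |linLinLoss a b (Ω / ((m : ℝ) + (k + 2) + d) / p)|
      ≤ ((m + 1) * ((m : ℝ) + k + 1) ^ k) * p ^ (k + 1) * (exp 1 * exp (-x)) *
        ((a + b) * (1 + Ω / (c * (m + 1)) / p)) := by gcongr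
    _ = (a + b) * (p * m + p + Ω / c) * (p * m + p * k + p) ^ k * (exp 1 * exp (-x)) := by
        have : (p * m + p * k + p) = p * ((m : ℝ) + k + 1) := by ring
        rw [this, mul_pow]
        field_simp
        ring
    _ ≤ _ := by
        have : p * k ≤ k := by nlinarith
        gcongr

lemma integrable_majorant (k : ℕ) (A B : ℝ) :
    IntegrableOn (fun x : ℝ => A * (x + 1 + B) * (x + k + 1) ^ k * (exp 1 * exp (-x)))
      (Ici 0) := by
  rw [integrableOn_Ici_iff_integrableOn_Ioi]
  refine integrable_of_isBigO_exp_neg (b := 1 / 2) (by norm_num) (by fun_prop) ?_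
  -- the polynomial factor is `o (exp (x / 2))`
  let P : Polynomial ℝ := Polynomial.C A * (Polynomial.X + 1 + Polynomial.C B) *
    (Polynomial.X + Polynomial.C (k : ℝ) + 1) ^ k * Polynomial.C (exp 1)
  have hP : (fun x : ℝ => P.eval x) =O[atTop] fun x => exp (1 / 2 * x) := by
    have h1 := P.isBigO_atTop_of_degree_le (Polynomial.X ^ P.natDegree)
      (by rw [Polynomial.degree_X_pow]; exact Polynomial.degree_le_natDegree)
    refine h1.trans ?_
    simpa using (isLittleO_pow_exp_pos_mul_atTop P.natDegree
      (by norm_num : (0 : ℝ) < 1 / 2)).isBigO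
  have := hP.mul (Asymptotics.isBigO_refl (fun x : ℝ => exp (-x)) atTop)
  refine this.congr (fun x => ?_) (fun x => ?_)
  · simp [P]; ring
  · rw [← exp_add]; ring_nf

/-! ### The pointwise limit -/

lemma tendsto_mul_floor {x : ℝ} (hx : 0 < x) :
    Tendsto (fun p : ℝ => p * (⌊x / p⌋₊ : ℝ)) (𝓝[>] 0) (𝓝 x) := by
  have hlow : Tendsto (fun p : ℝ => x - p) (𝓝[>] 0) (𝓝 x) := by
    have : Tendsto (fun p : ℝ => x - p) (𝓝 0) (𝓝 (x - 0)) := by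
      apply Continuous.tendsto; fun_prop
    rw [sub_zero] at this
    exact this.mono_left nhdsWithin_le_nhds
  refine tendsto_of_tendsto_of_tendsto_of_le_of_le' hlow tendsto_const_nhds ?_ ?_
  · filter_upwards [self_mem_nhdsWithin] with p hp
    have := Nat.lt_floor_add_one (x / p)
    rw [div_lt_iff₀ hp] at this
    linarith
  · filter_upwards [self_mem_nhdsWithin] with p hp
    have hp' : 0 < p := hp
    have := Nat.floor_le (a := x / p) (by positivity)
    rw [le_div_iff₀ hp] at this
    linarith

lemma tendsto_choose_mul_pow (k : ℕ) {x : ℝ} (hx : 0 < x) :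
    Tendsto (fun p : ℝ => ((⌊x / p⌋₊ + k + 1).choose (k + 1) : ℝ) * p ^ (k + 1)) (𝓝[>] 0)
      (𝓝 (x ^ (k + 1) / (k + 1).factorial)) := by
  have hid : Tendsto (fun p : ℝ => p) (𝓝[>] 0) (𝓝 0) := nhdsWithin_le_nhds
  have h : Tendsto (fun p : ℝ => (∏ i ∈ Finset.range (k + 1),
      (p * (⌊x / p⌋₊ : ℝ) + p * (1 + i))) / (k + 1).factorial) (𝓝[>] 0)
      (𝓝 ((∏ i ∈ Finset.range (k + 1), (x + 0 * (1 + (i : ℝ)))) / (k + 1).factorial)) := by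
    refine Tendsto.div_const (tendsto_finsetProd _ fun i _ => ?_) _
    exact (tendsto_mul_floor hx).add (hid.mul_const _)
  simp only [zero_mul, add_zero, Finset.prod_const, Finset.card_range] at h
  refine h.congr fun p => ?_
  have e := Nat.ascFactorial_eq_factorial_mul_choose (⌊x / p⌋₊) (k + 1)
  rw [Nat.ascFactorial_eq_prod_range] at e
  have e' : (∏ i ∈ Finset.range (k + 1), ((⌊x / p⌋₊ : ℝ) + 1 + i)) =
      (k + 1).factorial * ((⌊x / p⌋₊ + k + 1).choose (k + 1) : ℝ) := by
    exact_mod_cast e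
  have hf : ((k + 1).factorial : ℝ) ≠ 0 := by positivity
  rw [div_eq_iff hf, mul_right_comm, mul_comm _ ((k + 1).factorial : ℝ), ← e']
  conv_rhs => rw [← Finset.card_range (k + 1), ← Finset.prod_const, Finset.card_range]
  rw [← Finset.prod_mul_distrib]
  exact Finset.prod_congr rfl fun i _ => by ring

lemma tendsto_one_sub_pow {x : ℝ} (hx : 0 < x) :
    Tendsto (fun p : ℝ => (1 - p) ^ ⌊x / p⌋₊) (𝓝[>] 0) (𝓝 (exp (-x))) := by
  have hd : HasDerivAt (fun p : ℝ => log (1 - p)) (-1) 0 := by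
    have := ((hasDerivAt_id (0 : ℝ)).const_sub 1).log (by simp)
    simpa using this
  have hs : Tendsto (fun p : ℝ => p⁻¹ * log (1 - p)) (𝓝[>] 0) (𝓝 (-1)) := by
    have := hd.tendsto_slope_zero_right
    simpa using this
  have h := (continuous_exp.tendsto _).comp ((tendsto_mul_floor hx).mul hs)
  rw [mul_neg_one] at h
  refine h.congr' ?_
  filter_upwards [Ioo_mem_nhdsGT (zero_lt_one (α := ℝ))] with p hp
  have hp0 : p ≠ 0 := hp.1.ne'
  have : p * (⌊x / p⌋₊ : ℝ) * (p⁻¹ * log (1 - p)) = ⌊x / p⌋₊ * log (1 - p) := by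
    field_simp
  simp only [Function.comp, this]
  rw [exp_nat_mul, exp_log (by linarith [hp.2])]

lemma tendsto_scaledTerm (k : ℕ) (a b Ω d : ℝ) {x : ℝ} (hx : 0 < x) :
    Tendsto (fun p => scaledTerm k a b Ω d p x) (𝓝[>] 0)
      (𝓝 (x ^ (k + 1) / (k + 1).factorial * exp (-x) * linLinLoss a b (Ω / x))) := by
  unfold scaledTerm
  refine ((tendsto_choose_mul_pow k hx).mul (tendsto_one_sub_pow hx)).mul ?_
  refine ((linLinLoss_continuous a b).tendsto _).comp ?_
  have hid : Tendsto (fun p : ℝ => p) (𝓝[>] 0) (𝓝 0) := nhdsWithin_le_nhds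
  have h := (tendsto_mul_floor hx).add (hid.mul_const ((k : ℝ) + 2 + d))
  rw [zero_mul, add_zero] at h
  refine (Tendsto.div tendsto_const_nhds h hx.ne').congr fun p => ?_
  rw [Pi.div_apply, div_div]
  congr 1
  ring

/-! ### The limiting integral -/

lemma integral_pow_mul_exp_s7 (j : ℕ) :
    IntegrableOn (fun x : ℝ => x ^ j * exp (-x)) (Ioi 0) ∧
      ∫ x in Ioi (0 : ℝ), x ^ j * exp (-x) = j.factorial := by
  have hpos : (0 : ℝ) < (j : ℝ) + 1 := by positivity
  have e : (fun x : ℝ => exp (-x) * x ^ ((j : ℝ) + 1 - 1)) = fun x => x ^ j * exp (-x) := by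
    ext x
    rw [add_sub_cancel_right, rpow_natCast, mul_comm]
  constructor
  · have := Real.GammaIntegral_convergent hpos
    rwa [e] at this
  · rw [← Real.Gamma_nat_eq_factorial, Real.Gamma_eq_integral hpos, e]

lemma lowerGamma_nat (j : ℕ) {Ω : ℝ} (hΩ : 0 < Ω) :
    lowerGamma ((j : ℝ) + 1) Ω = (∫ x in Ioc 0 Ω, x ^ j * exp (-x)) / j.factorial := by
  unfold lowerGamma
  rw [Real.Gamma_nat_eq_factorial, intervalIntegral.integral_of_le hΩ.le]
  simp only [add_sub_cancel_right, rpow_natCast]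

lemma integral_limit (k : ℕ) (a b : ℝ) {Ω : ℝ} (hΩ : 0 < Ω) :
    ∫ x in Ioi (0 : ℝ), x ^ (k + 1) / (k + 1).factorial * exp (-x) * linLinLoss a b (Ω / x) =
      (a + b) * Ω * lowerGamma ((k : ℝ) + 1) Ω / ((k : ℝ) + 1) -
        (a + b) * lowerGamma ((k : ℝ) + 1 + 1) Ω + a * (1 - Ω / ((k : ℝ) + 1)) := by
  have hl := lowerGamma_nat (k + 1) hΩ
  push_cast at hl
  rw [lowerGamma_nat k hΩ, hl]
  obtain ⟨i0, v0⟩ := integral_pow_mul_exp_s7 k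
  obtain ⟨i1, v1⟩ := integral_pow_mul_exp_s7 (k + 1)
  have hsub : Ioc 0 Ω ⊆ Ioi (0 : ℝ) := Ioc_subset_Ioi_self
  have j0 := i0.mono_set hsub
  have j1 := i1.mono_set hsub
  set F : ℝ := ((k + 1).factorial : ℝ) with hF
  have hF0 : F ≠ 0 := by positivity
  have hsplit : ∀ x ∈ Ioi (0 : ℝ),
      x ^ (k + 1) / F * exp (-x) * linLinLoss a b (Ω / x) =
      (a / F * (x ^ (k + 1) * exp (-x)) - a * Ω / F * (x ^ k * exp (-x))) +
      (Ioc 0 Ω).indicator (fun x => (a + b) * Ω / F * (x ^ k * exp (-x)) -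
        (a + b) / F * (x ^ (k + 1) * exp (-x))) x := by
    intro x hx
    have hx0 : 0 < x := hx
    by_cases h : x ≤ Ω
    · rw [indicator_of_mem (show x ∈ Ioc 0 Ω from ⟨hx0, h⟩)]
      -- at `x = Ω` both branches of the loss vanish
      have hL : linLinLoss a b (Ω / x) = b * (Ω / x - 1) := by
        unfold linLinLoss
        split_ifs with h'
        · have : Ω / x = 1 := le_antisymm h' ((one_le_div hx0).2 h)
          simp [this]
        · rfl
      rw [hL]
      field_simp
      ring
    · rw [indicator_of_notMem (fun hh => h hh.2)]
      have hL : linLinLoss a b (Ω / x) = a * (1 - Ω / x) :=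
        if_pos ((div_le_one hx0).2 (not_le.1 h).le)
      rw [hL]
      field_simp
      ring
  rw [setIntegral_congr_fun measurableSet_Ioi hsplit, integral_add, integral_sub,
    setIntegral_indicator measurableSet_Ioc, inter_eq_self_of_subset_right hsub, integral_sub]
  · simp only [integral_const_mul, v0, v1]
    have : F = ((k : ℝ) + 1) * k.factorial := by
      rw [hF, Nat.factorial_succ]; push_cast; ring
    have hk : ((k : ℝ) + 1) ≠ 0 := by positivity
    have hkf : (k.factorial : ℝ) ≠ 0 := by positivity
    rw [this]
    field_simp
    ring
  · exact j0.const_mul _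
  · exact j1.const_mul _
  · exact i1.const_mul _
  · exact i0.const_mul _
  · exact (i1.const_mul _).sub (i0.const_mul _)
  · exact ((integrable_indicator_iff measurableSet_Ioc).2
      ((j0.const_mul _).sub (j1.const_mul _))).integrableOn

theorem stmt7 (ν : ℕ) (hν : 2 ≤ ν) (a b : ℝ) (ha : 0 ≤ a) (hb : 0 ≤ b)
    (hab : (a, b) ≠ (0, 0)) (Ω d : ℝ) (hΩ : 0 < Ω) (hd : -(ν : ℝ) < d) :
    Filter.Tendsto (risk ν (linLinLoss a b) (fun n => Ω / ((n : ℝ) + d)))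
      (nhdsWithin 0 (Set.Ioi 0))
      (nhds ((a + b) * Ω * lowerGamma ((ν : ℝ) - 1) Ω / ((ν : ℝ) - 1) -
        (a + b) * lowerGamma (ν : ℝ) Ω + a * (1 - Ω / ((ν : ℝ) - 1)))) := by
  obtain ⟨k, rfl⟩ : ∃ k, ν = k + 2 := ⟨ν - 2, by omega⟩
  have e1 : ((k + 2 : ℕ) : ℝ) - 1 = (k : ℝ) + 1 := by push_cast; ring
  have e2 : ((k + 2 : ℕ) : ℝ) = (k : ℝ) + 1 + 1 := by push_cast; ring
  rw [e1, e2, ← integral_limit k a b hΩ]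
  set c : ℝ := min 1 (k + 2 + d) with hcdef
  have hc : 0 < c := lt_min one_pos (by push_cast at hd; linarith)
  have hbound : ∀ p ∈ Ioo (0 : ℝ) 1, ∀ x ∈ Ici (0 : ℝ), ‖scaledTerm k a b Ω d p x‖ ≤
      (a + b) * (x + 1 + Ω / c) * (x + k + 1) ^ k * (exp 1 * exp (-x)) := fun p hp x hx =>
    norm_scaledTerm_le k ha hb hΩ hc (min_le_left _ _) (min_le_right _ _) hp.1 hp.2 hx
  have hmaj := integrable_majorant k (a + b) (Ω / c)
  have hev : ∀ᶠ p in 𝓝[>] (0 : ℝ), p ∈ Ioo (0 : ℝ) 1 := Ioo_mem_nhdsGT one_pos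
  have hlim : Tendsto (fun p => ∫ x in Ioi (0 : ℝ), scaledTerm k a b Ω d p x) (𝓝[>] 0)
      (𝓝 (∫ x in Ioi (0 : ℝ),
        x ^ (k + 1) / (k + 1).factorial * exp (-x) * linLinLoss a b (Ω / x))) := by
    refine tendsto_integral_filter_of_dominated_convergence _ ?_ ?_
      (hmaj.mono_set Ioi_subset_Ici_self) ?_
    · exact Eventually.of_forall fun p =>
        (measurable_scaledTerm k a b Ω d p).aestronglyMeasurable
    · filter_upwards [hev] with p hp
      filter_upwards [ae_restrict_mem measurableSet_Ioi] with x hx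
      exact hbound p hp x (Ioi_subset_Ici_self hx)
    · filter_upwards [ae_restrict_mem measurableSet_Ioi] with x hx
      exact tendsto_scaledTerm k a b Ω d hx
  refine hlim.congr' ?_
  filter_upwards [hev] with p hp
  rw [risk_eq_integral k a b Ω d hp.1, integral_Ici_eq_integral_Ioi]
  refine hmaj.mono' (measurable_scaledTerm k a b Ω d p).aestronglyMeasurable ?_
  filter_upwards [ae_restrict_mem measurableSet_Ici] with x hx
  exact hbound p hp x hx
end

section
/- Let ν ≥ 2 be an integer, let L be the normalized inverse-linear loss with parameters a, b ≥ 0, (a,b) ≠ (0,0), and consider the estimator p̂ = Ω/(N+d) with Ω > 0 and d > −ν. Then lim_{p→0⁺} R(p) = bΩ γ(ν−1, Ω)/(ν−1) + (a−b) γ(ν, Ω) − aν γ(ν+1, Ω)/Ω + a(ν/Ω − 1). -/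
/-!
As `p → 0⁺`, `p N` converges to a Gamma variable of shape `ν`, so the risk should converge to
`∫₀^∞ x^(ν-1) e^(-x) / (ν-1)! · L (Ω / x) dx`. To prove this, the series defining the risk is written
as the integral over `(0, ∞)` of the step function `stepFn`, whose value on `[n p, (n + 1) p)` is the
`n`-th term divided by `p` (`tsum_eq_integral`). The step functions converge pointwise
(`stepFn_tendsto`) to `limFn`, and for `p ∈ (0, 1)` they are bounded (`stepFn_bound`) by a fixed
combination of `x^ν e^(-x)`, `x^(ν-1) e^(-x)` and `x^(ν-2) e^(-x)`, which is integrable because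
`ν ≥ 2`. Dominated convergence gives the limit, and `integral_limFn` evaluates it by splitting the
integral at `x = Ω`. Throughout, `ν` is written as `m + 2`.
-/

open Real Filter Set

/-! ### The risk as an integral of a step function -/

/-- The step function in `x` whose value on `[n p, (n + 1) p)` is the `n`-th term of the risk series,
for `ν = m + 2` and the estimator `Ω / (N + d)`, divided by `p`. -/
noncomputable def stepFn (m : ℕ) (a b Ω d p x : ℝ) : ℝ :=
  p⁻¹ * (if m + 2 ≤ ⌊x / p⌋₊ then negBinomPMF (m + 2) p ⌊x / p⌋₊ *
    invLinLoss a b (Ω / ((⌊x / p⌋₊ : ℝ) + d) / p) else 0)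

/-- The pointwise limit of `stepFn` as `p → 0⁺`: the Gamma density of shape `m + 2` times the
loss `L (Ω / x)`. -/
noncomputable def limFn (m : ℕ) (a b Ω x : ℝ) : ℝ :=
  x ^ (m + 1) / (m + 1).factorial * Real.exp (-x) * invLinLoss a b (Ω / x)

/-- A function dominating `stepFn` on `(0, ∞)` uniformly in `p ∈ (0, 1)`. The constant `c` is a
lower bound for `(n + d) / (n + 1)` over `n ≥ m + 2`. -/
noncomputable def domFn (m : ℕ) (a b Ω d c x : ℝ) : ℝ :=
  x ^ (m + 1) * (Real.exp (m + 3) * Real.exp (-x)) * (a * ((x + |d|) / Ω) + b * (Ω / (c * x)))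

/-- A series is the integral over `(0, ∞)` of the step function with value `f n / p` on
`[n p, (n + 1) p)`. -/
lemma tsum_eq_integral (f : ℕ → ℝ) (p : ℝ) (hp : 0 < p)
    (hint : MeasureTheory.IntegrableOn (fun x => p⁻¹ * f ⌊x / p⌋₊) (Set.Ioi 0)) :
    ∑' n, f n = ∫ x in Set.Ioi (0:ℝ), p⁻¹ * f ⌊x / p⌋₊ := by
  rw [← MeasureTheory.integral_Ici_eq_integral_Ioi]
  have hU : Set.Ici (0:ℝ) = ⋃ n : ℕ, Set.Ico ((n:ℝ) * p) ((n + 1) * p) := by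
    ext x
    simp only [Set.mem_Ici, Set.mem_iUnion, Set.mem_Ico]
    constructor
    · intro hx
      exact ⟨⌊x / p⌋₊, (le_div_iff₀ hp).1 (Nat.floor_le (by positivity)),
        (div_lt_iff₀ hp).1 (Nat.lt_floor_add_one _)⟩
    · rintro ⟨n, h, -⟩
      exact le_trans (by positivity) h
  have hfl : ∀ n : ℕ, ∀ x ∈ Set.Ico ((n:ℝ) * p) ((n + 1) * p), ⌊x / p⌋₊ = n := by
    intro n x hx
    rw [Nat.floor_eq_iff (div_nonneg (le_trans (by positivity) hx.1) hp.le)]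
    exact ⟨(le_div_iff₀ hp).2 hx.1, (div_lt_iff₀ hp).2 hx.2⟩
  rw [← integrableOn_Ici_iff_integrableOn_Ioi] at hint
  rw [hU] at hint ⊢
  have := MeasureTheory.hasSum_integral_iUnion (fun n => measurableSet_Ico) ?_ hint
  · rw [← this.tsum_eq]
    congr 1
    ext n
    rw [MeasureTheory.setIntegral_congr_fun measurableSet_Ico
      (g := fun _ => p⁻¹ * f n) (fun x hx => by simp only [hfl n x hx])]
    rw [MeasureTheory.setIntegral_const]
    simp [MeasureTheory.measureReal_def]
    rw [ENNReal.toReal_ofReal (by nlinarith)]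
    field_simp
    ring
  · intro i j hij
    refine Set.disjoint_left.2 fun x hi hj => hij ?_
    rw [← hfl i x hi, hfl j x hj]

lemma stepFn_measurable (m : ℕ) (a b Ω d p : ℝ) : Measurable (stepFn m a b Ω d p) := by
  have : Measurable (fun n : ℕ => p⁻¹ * (if m + 2 ≤ n then negBinomPMF (m + 2) p n *
    invLinLoss a b (Ω / ((n : ℝ) + d) / p) else 0)) := measurable_from_nat
  exact this.comp (Nat.measurable_floor.comp (measurable_id.div_const p))

/-! ### Domination -/

lemma invLinLoss_bound {a b : ℝ} (ha : 0 ≤ a) (hb : 0 ≤ b) {x : ℝ} (hx : 0 < x) :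
    |invLinLoss a b x| ≤ a * (1 / x) + b * x := by
  unfold invLinLoss
  have h1 : 0 < 1 / x := by positivity
  split_ifs with h
  · have : 1 ≤ 1 / x := by rwa [le_div_iff₀ hx, one_mul]
    rw [abs_of_nonneg (mul_nonneg ha (by linarith))]
    nlinarith [mul_nonneg hb hx.le]
  · rw [abs_of_nonneg (mul_nonneg hb (by linarith))]
    nlinarith [mul_nonneg ha h1.le]

lemma stepFn_bound (m : ℕ) {a b Ω d p x : ℝ} (ha : 0 ≤ a) (hb : 0 ≤ b) (hΩ : 0 < Ω)
    (hd : 0 < (m:ℝ) + 2 + d) (hp : 0 < p) (hp1 : p < 1) (hx : 0 < x) :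
    |stepFn m a b Ω d p x| ≤ domFn m a b Ω d (min 1 ((m + 2 + d) / (m + 3))) x := by
  set c := min 1 (((m:ℝ) + 2 + d) / (m + 3)) with hc
  have hc0 : 0 < c := lt_min one_pos (by positivity)
  have hc1 : c ≤ 1 := min_le_left _ _
  have hc2 : c * (m + 3) ≤ m + 2 + d :=
    (le_div_iff₀ (by positivity)).1 (min_le_right _ _)
  unfold stepFn domFn
  have hn1 : (⌊x / p⌋₊ : ℝ) * p ≤ x := (le_div_iff₀ hp).1 (Nat.floor_le (by positivity))
  have hn2 : x < ((⌊x / p⌋₊ : ℝ) + 1) * p := (div_lt_iff₀ hp).1 (Nat.lt_floor_add_one _)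
  generalize ⌊x / p⌋₊ = n at *
  split_ifs with hmn
  swap
  · simp; positivity
  have hmn' : (m:ℝ) + 2 ≤ n := by exact_mod_cast hmn
  -- `n + d - c (n + 1) = (1 - c) (n - m - 2) + (m + 2 + d - c (m + 3))`, a sum of nonnegative terms
  have hnd : c * (n + 1) ≤ n + d := by nlinarith
  have hnd0 : 0 < (n:ℝ) + d := lt_of_lt_of_le (by positivity) hnd
  have hL := invLinLoss_bound ha hb (x := Ω / ((n : ℝ) + d) / p) (by positivity)
  have e1 : (Nat.choose (n - 1) (m + 1) : ℝ) * p ^ (m + 1) ≤ x ^ (m + 1) := by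
    have : (Nat.choose (n - 1) (m + 1) : ℝ) ≤ (n:ℝ) ^ (m + 1) := by
      exact_mod_cast (Nat.choose_le_pow _ _).trans (Nat.pow_le_pow_left (Nat.sub_le _ _) _)
    calc _ ≤ (n:ℝ) ^ (m + 1) * p ^ (m + 1) := by gcongr
      _ = (n * p) ^ (m + 1) := by rw [mul_pow]
      _ ≤ _ := by gcongr
  have e2 : (1 - p) ^ (n - (m + 2)) ≤ Real.exp (m + 3) * Real.exp (-x) := by
    calc _ ≤ (Real.exp (-p)) ^ (n - (m + 2)) := by
          exact pow_le_pow_left₀ (by linarith) (Real.one_sub_le_exp_neg p) _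
      _ = Real.exp (-((n - (m + 2)) * p)) := by
          rw [← Real.exp_nat_mul]; push_cast [Nat.cast_sub hmn]; ring_nf
      _ ≤ Real.exp (m + 3 + -x) := by
          gcongr
          nlinarith
      _ = _ := Real.exp_add _ _
  have e3 : |invLinLoss a b (Ω / ((n : ℝ) + d) / p)| ≤
      a * ((x + |d|) / Ω) + b * (Ω / (c * x)) := by
    refine hL.trans ?_
    have : 1 / (Ω / ((n : ℝ) + d) / p) = ((n + d) * p) / Ω := by field_simp
    rw [this, div_div]
    have hup : ((n:ℝ) + d) * p ≤ x + |d| := by nlinarith [le_abs_self d, abs_nonneg d]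
    have hlow : c * x ≤ ((n:ℝ) + d) * p := by nlinarith
    gcongr
  have e4 : p⁻¹ * (negBinomPMF (m + 2) p n * invLinLoss a b (Ω / ((n : ℝ) + d) / p)) =
      (Nat.choose (n - 1) (m + 1) * p ^ (m + 1)) * (1 - p) ^ (n - (m + 2)) *
        invLinLoss a b (Ω / ((n : ℝ) + d) / p) := by
    unfold negBinomPMF
    rw [show m + 2 - 1 = m + 1 from rfl, pow_succ p (m + 1)]
    field_simp
  have hq : 0 ≤ (1 - p) ^ (n - (m + 2)) := pow_nonneg (by linarith) _
  rw [e4, abs_mul, abs_of_nonneg (by positivity)]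
  gcongr

lemma integrableOn_pow_mul_exp_neg (k : ℕ) :
    MeasureTheory.IntegrableOn (fun x : ℝ => x ^ k * Real.exp (-x)) (Set.Ioi 0) := by
  have := Real.GammaIntegral_convergent (s := k + 1) (by positivity)
  simpa [mul_comm] using this

lemma domFn_integrable (m : ℕ) {a b Ω d c : ℝ} (hc : 0 < c) :
    MeasureTheory.IntegrableOn (domFn m a b Ω d c) (Set.Ioi 0) := by
  have hk := integrableOn_pow_mul_exp_neg
  have : MeasureTheory.IntegrableOn (fun x : ℝ =>
      (Real.exp (m + 3) * a / Ω) * (x ^ (m + 2) * Real.exp (-x)) +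
      (Real.exp (m + 3) * a * |d| / Ω) * (x ^ (m + 1) * Real.exp (-x)) +
      (Real.exp (m + 3) * b * Ω / c) * (x ^ m * Real.exp (-x))) (Set.Ioi 0) :=
    (((hk _).const_mul _).add ((hk _).const_mul _)).add ((hk _).const_mul _)
  refine this.congr_fun (fun x hx => ?_) measurableSet_Ioi
  have hx : 0 < x := hx
  unfold domFn
  field_simp
  ring

/-! ### Pointwise convergence -/

lemma floor_mul_tendsto {x : ℝ} (hx : 0 < x) :
    Tendsto (fun p : ℝ => (⌊x / p⌋₊ : ℝ) * p) (nhdsWithin 0 (Set.Ioi 0)) (nhds x) := by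
  have := (tendsto_nat_floor_mul_div_atTop (R := ℝ) hx.le).comp tendsto_inv_nhdsGT_zero
  simpa [Function.comp_def, div_eq_mul_inv] using this

lemma floor_add_mul_tendsto {x : ℝ} (hx : 0 < x) (e : ℝ) :
    Tendsto (fun p : ℝ => ((⌊x / p⌋₊ : ℝ) + e) * p) (nhdsWithin 0 (Set.Ioi 0)) (nhds x) := by
  have h0 : Tendsto (fun p : ℝ => p) (nhdsWithin 0 (Set.Ioi 0)) (nhds 0) :=
    tendsto_nhdsWithin_of_tendsto_nhds tendsto_id
  have := (floor_mul_tendsto hx).add (h0.const_mul e)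
  simpa [add_mul] using this

lemma floor_eventually_ge {x : ℝ} (hx : 0 < x) (k : ℕ) :
    ∀ᶠ p : ℝ in nhdsWithin 0 (Set.Ioi 0), k ≤ ⌊x / p⌋₊ := by
  have h : Tendsto (fun p : ℝ => ⌊x / p⌋₊) (nhdsWithin 0 (Set.Ioi 0)) atTop := by
    refine tendsto_nat_floor_atTop.comp ?_
    exact (tendsto_inv_nhdsGT_zero.const_mul_atTop hx).congr fun p => (div_eq_mul_inv x p).symm
  exact h.eventually_ge_atTop k

/-- With `n = ⌊x / p⌋`, `C(n - 1, k) p ^ k → x ^ k / k!`, by induction on `k` through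
`(k + 1) C(n - 1, k + 1) = (n - 1 - k) C(n - 1, k)`. -/
lemma choose_tendsto {x : ℝ} (hx : 0 < x) (k : ℕ) :
    Tendsto (fun p : ℝ => (Nat.choose (⌊x / p⌋₊ - 1) k : ℝ) * p ^ k)
      (nhdsWithin 0 (Set.Ioi 0)) (nhds (x ^ k / k.factorial)) := by
  induction k with
  | zero => simp
  | succ k ih =>
    have h := (ih.mul (floor_add_mul_tendsto hx (-(k + 1)))).div_const ((k:ℝ) + 1)
    have e : x ^ k / k.factorial * x / ((k:ℝ) + 1) = x ^ (k + 1) / (k + 1).factorial := by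
      rw [Nat.factorial_succ]; push_cast; field_simp; ring
    rw [e] at h
    refine h.congr' ?_
    filter_upwards [floor_eventually_ge hx (k + 1)] with p hp
    generalize ⌊x / p⌋₊ = n at *
    have := Nat.choose_succ_right_eq (n - 1) k
    have h2 : ((n - 1).choose (k + 1) : ℝ) * (k + 1) = (n - 1).choose k * (n + -(k + 1)) := by
      have h3 : ((n - 1 - k : ℕ) : ℝ) = n + -(k + 1) := by
        rw [Nat.sub_sub, Nat.cast_sub (by omega)]; push_cast; ring
      rw [← h3]; exact_mod_cast this
    rw [div_eq_iff (by positivity)]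
    linear_combination (-p ^ (k + 1)) * h2

/-- With `n = ⌊x / p⌋`, `(1 - p) ^ (n - k) → e⁻ˣ`, since `(n - k) p → x` and
`log (1 - p) / p → -1`. -/
lemma pow_tendsto {x : ℝ} (hx : 0 < x) (k : ℕ) :
    Tendsto (fun p : ℝ => (1 - p) ^ (⌊x / p⌋₊ - k))
      (nhdsWithin 0 (Set.Ioi 0)) (nhds (Real.exp (-x))) := by
  have hl : Tendsto (fun p : ℝ => Real.log (1 - p) / p) (nhdsWithin 0 (Set.Ioi 0)) (nhds (-1)) := by
    have hd : HasDerivAt (fun p : ℝ => Real.log (1 - p)) (-1) 0 := by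
      have := ((hasDerivAt_id (0:ℝ)).const_sub 1).log (by simp)
      simpa using this
    have := (hasDerivAt_iff_tendsto_slope.1 hd).mono_left
      (nhdsWithin_mono 0 (fun y (hy : 0 < y) => (ne_of_gt hy : y ≠ 0)))
    refine this.congr fun p => ?_
    simp [slope_def_field]
  have h := ((floor_add_mul_tendsto hx (-(k:ℝ))).mul hl).rexp
  rw [mul_neg_one] at h
  refine h.congr' ?_
  filter_upwards [floor_eventually_ge hx k, Ioo_mem_nhdsGT (zero_lt_one' ℝ)] with p hk hp
  have hp0 : p ≠ 0 := ne_of_gt hp.1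
  rw [show ((⌊x / p⌋₊ : ℝ) + -(k:ℝ)) * p * (Real.log (1 - p) / p) =
    ((⌊x / p⌋₊ - k : ℕ) : ℝ) * Real.log (1 - p) by rw [Nat.cast_sub hk]; field_simp; ring]
  rw [Real.exp_nat_mul, Real.exp_log (by linarith [hp.2])]

lemma invLinLoss_continuousAt (a b : ℝ) {x : ℝ} (hx : 0 < x) :
    ContinuousAt (invLinLoss a b) x := by
  have : ContinuousOn (invLinLoss a b) (Set.Ioi 0) := by
    -- the two branches agree at `1`, which the `min`/`max` form makes visible
    have e : Set.EqOn (invLinLoss a b)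
        (fun x => a * (1 / min x 1 - 1) + b * (max x 1 - 1)) (Set.Ioi 0) := by
      intro y hy
      unfold invLinLoss
      split_ifs with h
      · simp [min_eq_left h, max_eq_right h]
      · simp [min_eq_right (le_of_not_ge h), max_eq_left (le_of_not_ge h)]
    refine ContinuousOn.congr ?_ e
    refine ContinuousOn.add (continuousOn_const.mul (ContinuousOn.sub (ContinuousOn.div
      continuousOn_const (by fun_prop) ?_) continuousOn_const)) (by fun_prop)
    intro y hy
    exact ne_of_gt (lt_min hy one_pos)
  exact this.continuousAt (Ioi_mem_nhds hx)

lemma stepFn_tendsto (m : ℕ) (a b Ω d : ℝ) (hΩ : 0 < Ω) {x : ℝ} (hx : 0 < x) :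
    Tendsto (fun p => stepFn m a b Ω d p x) (nhdsWithin 0 (Set.Ioi 0))
      (nhds (limFn m a b Ω x)) := by
  have hL : Tendsto (fun p : ℝ => invLinLoss a b (Ω / ((⌊x / p⌋₊ : ℝ) + d) / p))
      (nhdsWithin 0 (Set.Ioi 0)) (nhds (invLinLoss a b (Ω / x))) := by
    refine (invLinLoss_continuousAt a b (by positivity)).tendsto.comp ?_
    exact ((tendsto_const_nhds (x := Ω)).div (floor_add_mul_tendsto hx d) hx.ne').congr
      fun p => (div_div _ _ _).symm
  refine (((choose_tendsto hx (m + 1)).mul (pow_tendsto hx (m + 2))).mul hL).congr' ?_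
  filter_upwards [floor_eventually_ge hx (m + 2), self_mem_nhdsWithin] with p hk hp
  have hp : 0 < p := hp
  unfold stepFn negBinomPMF
  rw [if_pos hk, show m + 2 - 1 = m + 1 from rfl, pow_succ p (m + 1)]
  field_simp

/-! ### The limiting integral and the conclusion -/

/-- The limiting integral in closed form, by splitting at `x = Ω`, where the loss changes branch. -/
lemma integral_limFn (m : ℕ) (a b Ω : ℝ) (hΩ : 0 < Ω) :
    ∫ x in Set.Ioi (0:ℝ), limFn m a b Ω x =
      b * Ω * lowerGamma ((m : ℝ) + 1) Ω / (m + 1) + (a - b) * lowerGamma (m + 2) Ω -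
        a * (m + 2) * lowerGamma (m + 3) Ω / Ω + a * ((m + 2) / Ω - 1) := by
  have hk := integrableOn_pow_mul_exp_neg
  have hT : ∀ k : ℕ, ∫ x in Set.Ioi (0:ℝ), x ^ k * Real.exp (-x) = k.factorial := by
    intro k
    have := Real.Gamma_eq_integral (s := k + 1) (by positivity)
    rw [Real.Gamma_nat_eq_factorial] at this
    simp [this, mul_comm]
  have hg : ∀ k : ℕ, lowerGamma ((k:ℝ) + 1) Ω =
      (∫ x in Set.Ioc 0 Ω, x ^ k * Real.exp (-x)) / k.factorial := by
    intro k
    unfold lowerGamma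
    rw [Real.Gamma_nat_eq_factorial, intervalIntegral.integral_of_le hΩ.le]
    simp
  have hsplit : Set.Ioc 0 Ω ∪ Set.Ioi Ω = Set.Ioi 0 := Set.Ioc_union_Ioi_eq_Ioi hΩ.le
  have hdis : Disjoint (Set.Ioc 0 Ω) (Set.Ioi Ω) := Set.Ioc_disjoint_Ioi le_rfl
  have hk1 : ∀ k : ℕ, MeasureTheory.IntegrableOn (fun x : ℝ => x ^ k * Real.exp (-x))
      (Set.Ioc 0 Ω) := fun k => (hk k).mono_set Set.Ioc_subset_Ioi_self
  have hk2 : ∀ k : ℕ, MeasureTheory.IntegrableOn (fun x : ℝ => x ^ k * Real.exp (-x))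
      (Set.Ioi Ω) := fun k => (hk k).mono_set (Set.Ioi_subset_Ioi hΩ.le)
  have hI : ∀ k : ℕ, ∫ x in Set.Ioi Ω, x ^ k * Real.exp (-x) =
      k.factorial - ∫ x in Set.Ioc 0 Ω, x ^ k * Real.exp (-x) := by
    intro k
    rw [← hT k, ← hsplit, MeasureTheory.setIntegral_union hdis measurableSet_Ioi (hk1 k) (hk2 k)]
    ring
  have E1 : Set.EqOn (limFn m a b Ω) (fun x =>
      (b * Ω / (m + 1).factorial) * (x ^ m * Real.exp (-x)) -
      (b / (m + 1).factorial) * (x ^ (m + 1) * Real.exp (-x))) (Set.Ioc 0 Ω) := by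
    intro x hx
    have hx0 : 0 < x := hx.1
    have hL : invLinLoss a b (Ω / x) = b * (Ω / x - 1) := by
      unfold invLinLoss
      split_ifs with h
      · rw [div_le_one hx0] at h
        -- at `x = Ω` both branches of the loss vanish
        obtain rfl : x = Ω := le_antisymm hx.2 h
        simp [hΩ.ne']
      · rfl
    simp only [limFn, hL]
    field_simp
    ring
  have E2 : Set.EqOn (limFn m a b Ω) (fun x =>
      (a / Ω / (m + 1).factorial) * (x ^ (m + 2) * Real.exp (-x)) -
      (a / (m + 1).factorial) * (x ^ (m + 1) * Real.exp (-x))) (Set.Ioi Ω) := by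
    intro x hx
    have hx0 : 0 < x := hΩ.trans hx
    have hL : invLinLoss a b (Ω / x) = a * (1 / (Ω / x) - 1) := by
      unfold invLinLoss
      rw [if_pos ((div_le_one hx0).2 (le_of_lt hx))]
    simp only [limFn, hL]
    field_simp
    ring
  have i1 := ((hk1 m).const_mul (b * Ω / (m + 1).factorial)).sub
    ((hk1 (m + 1)).const_mul (b / (m + 1).factorial))
  have i2 := ((hk2 (m + 2)).const_mul (a / Ω / (m + 1).factorial)).sub
    ((hk2 (m + 1)).const_mul (a / (m + 1).factorial))
  rw [← hsplit, MeasureTheory.setIntegral_union hdis measurableSet_Ioi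
    (MeasureTheory.IntegrableOn.congr_fun i1 E1.symm measurableSet_Ioc)
    (MeasureTheory.IntegrableOn.congr_fun i2 E2.symm measurableSet_Ioi),
    MeasureTheory.setIntegral_congr_fun measurableSet_Ioc E1,
    MeasureTheory.setIntegral_congr_fun measurableSet_Ioi E2,
    MeasureTheory.integral_sub ((hk1 m).const_mul _) ((hk1 (m + 1)).const_mul _),
    MeasureTheory.integral_sub ((hk2 (m + 2)).const_mul _) ((hk2 (m + 1)).const_mul _)]
  simp only [MeasureTheory.integral_const_mul]
  have g2 := hg (m + 1)
  have g3 := hg (m + 2)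
  push_cast at g2 g3
  rw [show (m:ℝ) + 1 + 1 = m + 2 by ring] at g2
  rw [show (m:ℝ) + 2 + 1 = m + 3 by ring] at g3
  rw [hI, hI, hg, g2, g3]
  generalize (∫ x in Set.Ioc 0 Ω, x ^ m * Real.exp (-x)) = A
  generalize (∫ x in Set.Ioc 0 Ω, x ^ (m + 1) * Real.exp (-x)) = B
  generalize (∫ x in Set.Ioc 0 Ω, x ^ (m + 2) * Real.exp (-x)) = C
  have f1 : (((m + 1).factorial : ℕ) : ℝ) = (m + 1) * m.factorial := by
    rw [Nat.factorial_succ]; push_cast; ring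
  have f2 : (((m + 2).factorial : ℕ) : ℝ) = (m + 2) * ((m + 1) * m.factorial) := by
    rw [Nat.factorial_succ]; push_cast [f1]; ring
  rw [f2, f1]
  field_simp
  ring

theorem stmt8 (ν : ℕ) (hν : 2 ≤ ν) (a b : ℝ) (ha : 0 ≤ a) (hb : 0 ≤ b)
    (hab : (a, b) ≠ (0, 0)) (Ω d : ℝ) (hΩ : 0 < Ω) (hd : -(ν : ℝ) < d) :
    Filter.Tendsto (risk ν (invLinLoss a b) (fun n => Ω / ((n : ℝ) + d)))
      (nhdsWithin 0 (Set.Ioi 0))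
      (nhds (b * Ω * lowerGamma ((ν : ℝ) - 1) Ω / ((ν : ℝ) - 1) +
        (a - b) * lowerGamma (ν : ℝ) Ω -
        a * (ν : ℝ) * lowerGamma ((ν : ℝ) + 1) Ω / Ω + a * ((ν : ℝ) / Ω - 1))) := by
  obtain ⟨m, rfl⟩ : ∃ m, ν = m + 2 := ⟨ν - 2, by omega⟩
  push_cast at hd ⊢
  rw [show (m:ℝ) + 2 - 1 = m + 1 by ring, show (m:ℝ) + 2 + 1 = m + 3 by ring,
    ← integral_limFn m a b Ω hΩ]
  have hd' : 0 < (m:ℝ) + 2 + d := by linarith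
  have hc : 0 < min 1 (((m:ℝ) + 2 + d) / (m + 3)) := lt_min one_pos (by positivity)
  have hdom := domFn_integrable m (a := a) (b := b) (Ω := Ω) (d := d) hc
  have hbd : ∀ p ∈ Set.Ioo (0:ℝ) 1, ∀ᵐ x ∂(MeasureTheory.volume.restrict (Set.Ioi (0:ℝ))),
      ‖stepFn m a b Ω d p x‖ ≤ domFn m a b Ω d (min 1 ((m + 2 + d) / (m + 3))) x := by
    intro p hp
    filter_upwards [MeasureTheory.ae_restrict_mem measurableSet_Ioi] with x hx
    exact stepFn_bound m ha hb hΩ hd' hp.1 hp.2 hx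
  have hlim : Tendsto (fun p => ∫ x in Set.Ioi (0:ℝ), stepFn m a b Ω d p x)
      (nhdsWithin 0 (Set.Ioi 0)) (nhds (∫ x in Set.Ioi (0:ℝ), limFn m a b Ω x)) := by
    refine MeasureTheory.tendsto_integral_filter_of_dominated_convergence _
      (Eventually.of_forall fun p => (stepFn_measurable m a b Ω d p).aestronglyMeasurable)
      ?_ hdom ?_
    · filter_upwards [Ioo_mem_nhdsGT (zero_lt_one' ℝ)] with p hp using hbd p hp
    · filter_upwards [MeasureTheory.ae_restrict_mem measurableSet_Ioi] with x hx
      exact stepFn_tendsto m a b Ω d hΩ hx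
  refine hlim.congr' ?_
  filter_upwards [Ioo_mem_nhdsGT (zero_lt_one' ℝ)] with p hp
  have hint : MeasureTheory.IntegrableOn (stepFn m a b Ω d p) (Set.Ioi 0) :=
    MeasureTheory.Integrable.mono' hdom (stepFn_measurable m a b Ω d p).aestronglyMeasurable
      (hbd p hp)
  exact (tsum_eq_integral (fun n => if m + 2 ≤ n then negBinomPMF (m + 2) p n *
    invLinLoss a b (Ω / ((n : ℝ) + d) / p) else 0) p hp.1 hint).symm
end

section
/- Let ν ≥ 2 be an integer and a, b > 0. Define G(Ω) = (a+b)Ω γ(ν−1, Ω)/(ν−1) − (a+b) γ(ν, Ω) + a(1 − Ω/(ν−1)) for Ω > 0. Then G is differentiable with G′(Ω) = ((a+b) γ(ν−1, Ω) − a)/(ν−1), which is strictly increasing in Ω; consequently there is a unique Ω* > 0 satisfying γ(ν−1, Ω*) = a/(a+b), and Ω* is the unique global minimizer of G on (0,∞). -/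
/-!
The density `s ^ (t - 1) * exp (-s)` is continuous for `t ≥ 1` and positive for `s > 0`, so
`lowerGamma t` is differentiable by the fundamental theorem of calculus, strictly increasing on
`[0, ∞)`, zero at `0`, and tends to `1` at infinity by Euler's integral for `Γ`. In the derivative
of `Gll`, the two density terms cancel because `Γ(ν) = (ν - 1) Γ(ν - 1)`, which leaves a strictly
increasing affine function of `lowerGamma (ν - 1)`. The intermediate value theorem gives its unique
zero `Ωs`; the derivative is negative before `Ωs` and positive after it, hence `Ωs` is the strict
global minimizer.
-/

open Real Filter Set

/-- Asymptotic risk under normalized linear-linear loss, as a function of `Ω`. -/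
noncomputable def Gll (ν : ℕ) (a b Ω : ℝ) : ℝ :=
  (a + b) * Ω * lowerGamma ((ν : ℝ) - 1) Ω / ((ν : ℝ) - 1) -
    (a + b) * lowerGamma (ν : ℝ) Ω + a * (1 - Ω / ((ν : ℝ) - 1))

lemma continuous_gamma_density {t : ℝ} (ht : 1 ≤ t) :
    Continuous fun s : ℝ => s ^ (t - 1) * Real.exp (-s) :=
  (Real.continuous_rpow_const (by linarith)).mul (by fun_prop)

lemma hasDerivAt_lowerGamma {t : ℝ} (ht : 1 ≤ t) (u : ℝ) :
    HasDerivAt (lowerGamma t) (u ^ (t - 1) * Real.exp (-u) / Real.Gamma t) u :=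
  ((continuous_gamma_density ht).integral_hasStrictDerivAt 0 u).hasDerivAt.div_const _

lemma continuous_lowerGamma {t : ℝ} (ht : 1 ≤ t) : Continuous (lowerGamma t) :=
  continuous_iff_continuousAt.2 fun u => (hasDerivAt_lowerGamma ht u).continuousAt

lemma strictMonoOn_lowerGamma {t : ℝ} (ht : 1 ≤ t) : StrictMonoOn (lowerGamma t) (Ici 0) := by
  refine strictMonoOn_of_deriv_pos (convex_Ici 0) (continuous_lowerGamma ht).continuousOn ?_
  intro u hu
  rw [interior_Ici] at hu
  have hu : 0 < u := hu
  have := Real.Gamma_pos_of_pos (show 0 < t by linarith)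
  rw [(hasDerivAt_lowerGamma ht u).deriv]
  positivity

lemma tendsto_lowerGamma {t : ℝ} (ht : 1 ≤ t) : Tendsto (lowerGamma t) atTop (nhds 1) := by
  have ht0 : 0 < t := by linarith
  have hconv := Real.GammaIntegral_convergent ht0
  have h := MeasureTheory.intervalIntegral_tendsto_integral_Ioi 0 hconv tendsto_id
  rw [← Real.Gamma_eq_integral ht0] at h
  have h2 := h.div_const (Real.Gamma t)
  rw [div_self (Real.Gamma_pos_of_pos ht0).ne'] at h2
  refine h2.congr fun u => ?_
  simp only [lowerGamma, id, mul_comm]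

lemma hasDerivAt_Gll (ν : ℕ) (hν : 2 ≤ ν) (a b Ω : ℝ) (hΩ : 0 < Ω) :
    HasDerivAt (Gll ν a b)
      (((a + b) * lowerGamma ((ν : ℝ) - 1) Ω - a) / ((ν : ℝ) - 1)) Ω := by
  have hν' : (2 : ℝ) ≤ ν := by exact_mod_cast hν
  have h1 := hasDerivAt_lowerGamma (t := (ν : ℝ) - 1) (by linarith) Ω
  have h2 := hasDerivAt_lowerGamma (t := (ν : ℝ)) (by linarith) Ω
  have hn : (ν : ℝ) - 1 ≠ 0 := by linarith
  have hΓ : Real.Gamma ν = ((ν : ℝ) - 1) * Real.Gamma ((ν : ℝ) - 1) := by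
    simpa using Real.Gamma_add_one hn
  have hΓ1 : Real.Gamma ((ν : ℝ) - 1) ≠ 0 := (Real.Gamma_pos_of_pos (by linarith)).ne'
  have hpow : Ω ^ ((ν : ℝ) - 1) = Ω ^ ((ν : ℝ) - 1 - 1) * Ω := by
    simpa using Real.rpow_add_one hΩ.ne' ((ν : ℝ) - 1 - 1)
  have h := (((((hasDerivAt_id Ω).const_mul (a + b)).mul h1).div_const ((ν : ℝ) - 1)).sub
    (h2.const_mul (a + b))).add
    ((((hasDerivAt_id Ω).div_const ((ν : ℝ) - 1)).const_sub 1).const_mul a)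
  refine h.congr_deriv ?_
  rw [hΓ, hpow]
  simp only [id]
  field_simp
  ring

theorem stmt9 (ν : ℕ) (hν : 2 ≤ ν) (a b : ℝ) (ha : 0 < a) (hb : 0 < b) :
    (∀ Ω : ℝ, 0 < Ω →
        HasDerivAt (Gll ν a b)
          (((a + b) * lowerGamma ((ν : ℝ) - 1) Ω - a) / ((ν : ℝ) - 1)) Ω) ∧
      StrictMonoOn (fun Ω : ℝ => ((a + b) * lowerGamma ((ν : ℝ) - 1) Ω - a) / ((ν : ℝ) - 1))
        (Set.Ioi 0) ∧
      (∃! Ωs : ℝ, 0 < Ωs ∧ lowerGamma ((ν : ℝ) - 1) Ωs = a / (a + b)) ∧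
      ∀ Ωs : ℝ, 0 < Ωs → lowerGamma ((ν : ℝ) - 1) Ωs = a / (a + b) →
        ∀ Ω : ℝ, 0 < Ω → Ω ≠ Ωs → Gll ν a b Ωs < Gll ν a b Ω := by
  have hν' : (2 : ℝ) ≤ ν := by exact_mod_cast hν
  have ht : 1 ≤ (ν : ℝ) - 1 := by linarith
  have hpos : 0 < (ν : ℝ) - 1 := by linarith
  have hab : 0 < a + b := by linarith
  have hmono := strictMonoOn_lowerGamma ht
  have hD := fun Ω hΩ => hasDerivAt_Gll ν hν a b Ω hΩ
  have hS : StrictMonoOn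
      (fun Ω : ℝ => ((a + b) * lowerGamma ((ν : ℝ) - 1) Ω - a) / ((ν : ℝ) - 1)) (Set.Ioi 0) := by
    intro x hx y hy hxy
    have := hmono (Ioi_subset_Ici_self hx) (Ioi_subset_Ici_self hy) hxy
    dsimp only
    gcongr
  refine ⟨hD, hS, ?_, ?_⟩
  · have h0 : lowerGamma ((ν : ℝ) - 1) 0 = 0 := by simp [lowerGamma]
    have hq0 : 0 < a / (a + b) := by positivity
    have hq1 : a / (a + b) < 1 := (div_lt_one hab).2 (by linarith)
    obtain ⟨M, hM, hM0⟩ :=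
      (((tendsto_lowerGamma ht).eventually_const_lt hq1).and (eventually_ge_atTop 0)).exists
    obtain ⟨x, hx, hxe⟩ := intermediate_value_Icc hM0 (continuous_lowerGamma ht).continuousOn
      ⟨h0.trans_le hq0.le, hM.le⟩
    have hx0 : 0 < x := by
      refine lt_of_le_of_ne hx.1 ?_
      rintro rfl
      linarith
    exact ⟨x, ⟨hx0, hxe⟩, fun y hy => hmono.injOn hy.1.le hx0.le (hy.2.trans hxe.symm)⟩
  · intro Ωs hs hse Ω hΩ hne
    have hzero : ((a + b) * lowerGamma ((ν : ℝ) - 1) Ωs - a) / ((ν : ℝ) - 1) = 0 := by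
      rw [hse]
      field_simp
      ring
    rcases lt_or_gt_of_ne hne with h | h
    · have hanti : StrictAntiOn (Gll ν a b) (Icc Ω Ωs) := by
        refine strictAntiOn_of_deriv_neg (convex_Icc _ _)
          (fun x hx => (hD x (hΩ.trans_le hx.1)).continuousAt.continuousWithinAt) ?_
        intro x hx
        rw [interior_Icc] at hx
        have hx0 : 0 < x := hΩ.trans hx.1
        rw [(hD x hx0).deriv, ← hzero]
        exact hS hx0 hs hx.2
      exact hanti (left_mem_Icc.2 h.le) (right_mem_Icc.2 h.le) h
    · have hmon : StrictMonoOn (Gll ν a b) (Icc Ωs Ω) := by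
        refine strictMonoOn_of_deriv_pos (convex_Icc _ _)
          (fun x hx => (hD x (hs.trans_le hx.1)).continuousAt.continuousWithinAt) ?_
        intro x hx
        rw [interior_Icc] at hx
        have hx0 : 0 < x := hs.trans hx.1
        rw [(hD x hx0).deriv, ← hzero]
        exact hS hs hx0 hx.1
      exact hmon (left_mem_Icc.2 h.le) (right_mem_Icc.2 h.le) h
end

section
/- Let ν ≥ 2 be an integer. There exists a unique ratio r = a/b > 0 with the following property: writing Ω_il = Ω_il(r) = (ν−1)(1 + ((r+1)/2)(√(1 + 4r/((ν−1)(r+1)²)) − 1)), the identity γ(ν−1, Ω_il)/(1 − γ(ν+1, Ω_il)) = ν(Ω_il − ν + 1)/(Ω_il(ν − Ω_il)) holds; equivalently, Ω_il coincides with the unique minimizer Ω* > 0 of the asymptotic inverse-linear risk, characterized by (Ω*)²/(ν(ν−1)) = r(1 − γ(ν+1, Ω*))/γ(ν−1, Ω*). -/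
/-!
Put `m = ν - 1`. For `r > 0` the number `y = Ω_il(r) - m` is the positive root of
`y² + m (r + 1) y = m r`, so `r ↦ y` is a bijection from `(0, ∞)` onto `(0, 1)` with inverse
`y ↦ y (m + y) / (m (1 - y))` (`omega_quadratic`, `omega_eq_of_quadratic`). Under this relation the
two identities of the theorem are the same equation for `Ω = m + y`.

Let `P = γ(m, Ω)` and `D = Ω^m e^{-Ω} / m!`. The recurrence of the incomplete gamma function gives
`1 - γ(m + 2, Ω) = 1 - P + D (1 + Ω / (m + 1))`, and the equation becomes `gap y = 0`, where
`gap y = P - A(y) - B(y) D` with `A = (m + 1) y / Q`, `B = y (2 m + 1 + y) / Q` and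
`Q = m + 2 y - y²`. Since `P' = D m / (m + y)` and `D' = - D y / (m + y)`, the derivative of `gap`
is `D (m / (m + y) + B y / (m + y) - B') - A'`. Here `A' > 0`, and the coefficient of `D` is
negative because, after clearing denominators, it is minus a polynomial that is visibly positive
for `m > 0` and `0 ≤ y ≤ 1` (`gap_deriv_neg`). So `gap` decreases strictly from
`gap 0 = γ(m, m) > 0` to `gap 1 < 0` and has exactly one zero in `(0, 1)`.
-/

open Real Filter Set

/-- `Ω_il` as a function of the ratio `r = a/b`. -/
noncomputable def OmegaR (ν : ℕ) (r : ℝ) : ℝ :=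
  ((ν : ℝ) - 1) *
    (1 + ((r + 1) / 2) * (Real.sqrt (1 + 4 * r / (((ν : ℝ) - 1) * (r + 1) ^ 2)) - 1))

/-! ### The incomplete gamma function at integer parameters -/

/-- The unnormalized lower incomplete gamma function `∫₀^u s^j e^{-s} ds` at the integer parameter
`j + 1`, with a natural-number exponent. -/
noncomputable def incGamma (j : ℕ) (u : ℝ) : ℝ := ∫ s in (0:ℝ)..u, s ^ j * Real.exp (-s)

lemma lowerGamma_eq (j : ℕ) (u : ℝ) : lowerGamma ((j : ℝ) + 1) u = incGamma j u / j.factorial := by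
  unfold lowerGamma incGamma
  rw [Real.Gamma_nat_eq_factorial]
  simp [Real.rpow_natCast]

lemma incGamma_hasDerivAt (j : ℕ) (u : ℝ) :
    HasDerivAt (incGamma j) (u ^ j * Real.exp (-u)) u := by
  have hc : Continuous fun s : ℝ => s ^ j * Real.exp (-s) := by fun_prop
  exact intervalIntegral.integral_hasDerivAt_right (hc.intervalIntegrable _ _)
    (hc.stronglyMeasurableAtFilter _ _) hc.continuousAt

lemma incGamma_succ (j : ℕ) (u : ℝ) :
    incGamma (j + 1) u = (j + 1) * incGamma j u - u ^ (j + 1) * Real.exp (-u) := by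
  have hc : ∀ i : ℕ, Continuous fun s : ℝ => s ^ i * Real.exp (-s) := fun i => by fun_prop
  have h : ∫ s in (0:ℝ)..u, ((j + 1) * (s ^ j * Real.exp (-s)) - s ^ (j + 1) * Real.exp (-s))
      = u ^ (j + 1) * Real.exp (-u) - 0 ^ (j + 1) * Real.exp (-0) := by
    refine intervalIntegral.integral_eq_sub_of_hasDerivAt
      (f := fun s : ℝ => s ^ (j + 1) * Real.exp (-s)) (fun x _ => ?_) ?_
    · have h1 := (hasDerivAt_pow (j + 1) x).mul ((hasDerivAt_neg x).exp)
      refine h1.congr_deriv ?_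
      push_cast [Nat.add_sub_cancel]
      ring
    · exact ((continuous_const.mul (hc j)).sub (hc (j + 1))).intervalIntegrable _ _
  rw [intervalIntegral.integral_sub (((hc j).intervalIntegrable _ _).const_mul _)
    ((hc (j + 1)).intervalIntegrable _ _), intervalIntegral.integral_const_mul] at h
  simp only [ne_eq, Nat.add_eq_zero_iff, one_ne_zero, and_false, not_false_eq_true, zero_pow,
    zero_mul, sub_zero] at h
  unfold incGamma
  linarith

lemma incGamma_pos (j : ℕ) {u : ℝ} (hu : 0 < u) : 0 < incGamma j u := by
  have hc : Continuous fun s : ℝ => s ^ j * Real.exp (-s) := by fun_prop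
  refine intervalIntegral.intervalIntegral_pos_of_pos_on (hc.intervalIntegrable _ _) ?_ hu
  intro x hx
  have := hx.1
  positivity

lemma incGamma_lt_factorial (j : ℕ) {u : ℝ} (hu : 0 < u) : incGamma j u < j.factorial := by
  induction j with
  | zero =>
    have h : incGamma 0 u = 1 - Real.exp (-u) := by
      unfold incGamma
      have := intervalIntegral.integral_eq_sub_of_hasDerivAt (a := 0) (b := u)
        (f := fun s : ℝ => -Real.exp (-s)) (f' := fun s : ℝ => s ^ 0 * Real.exp (-s))
        (fun x _ => by
          refine ((hasDerivAt_neg x).exp).neg.congr_deriv ?_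
          simp)
        ((show Continuous fun s : ℝ => s ^ 0 * Real.exp (-s) by fun_prop).intervalIntegrable _ _)
      rw [this]
      simp
      ring
    rw [h]
    have := Real.exp_pos (-u)
    simp [this]
  | succ j ih =>
    rw [incGamma_succ, Nat.factorial_succ]
    push_cast
    have h1 : 0 < u ^ (j + 1) * Real.exp (-u) := by positivity
    have h2 : ((j : ℝ) + 1) * incGamma j u < (j + 1) * j.factorial := by gcongr
    linarith

/-! ### The function `gap` and its unique zero -/

/-- With `m = k + 1`, this is `D(y) = Ω^m e^{-Ω} / m!` at `Ω = m + y`. -/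
noncomputable def dens (k : ℕ) (y : ℝ) : ℝ :=
  ((k : ℝ) + 1 + y) ^ (k + 1) * Real.exp (-((k : ℝ) + 1 + y)) / (k + 1).factorial

/-- With `m = k + 1` and `Q = m + 2 y - y²`, this is
`γ(m, m + y) - (m + 1) y / Q - (y (2 m + 1 + y) / Q) D(y)`. On `(0, 1)` it vanishes exactly where
`Ω = m + y` satisfies the identity that characterizes the ratio. -/
noncomputable def gap (k : ℕ) (y : ℝ) : ℝ :=
  incGamma k ((k : ℝ) + 1 + y) / k.factorial
    - ((k : ℝ) + 2) * y / ((k : ℝ) + 1 + 2 * y - y ^ 2)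
    - y * (2 * (k : ℝ) + 3 + y) / ((k : ℝ) + 1 + 2 * y - y ^ 2) * dens k y

lemma dens_pos (k : ℕ) {y : ℝ} (hy : 0 ≤ y) : 0 < dens k y := by
  unfold dens
  positivity

lemma dens_hasDerivAt (k : ℕ) {y : ℝ} (hy : 0 ≤ y) :
    HasDerivAt (dens k) (-(y / ((k : ℝ) + 1 + y)) * dens k y) y := by
  have h0 : HasDerivAt (fun y : ℝ => (k : ℝ) + 1 + y) 1 y := (hasDerivAt_id y).const_add _
  have h := ((h0.pow (k + 1)).mul (h0.neg.exp)).div_const ((k + 1).factorial : ℝ)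
  have hp : (k : ℝ) + 1 + y ≠ 0 := by positivity
  have hf : ((k + 1).factorial : ℝ) ≠ 0 := by positivity
  refine h.congr_deriv ?_
  unfold dens
  simp only [Nat.add_sub_cancel, Pi.pow_apply, Pi.neg_apply]
  push_cast
  field_simp
  ring

lemma incGamma_shift_hasDerivAt (k : ℕ) {y : ℝ} (hy : 0 ≤ y) :
    HasDerivAt (fun y : ℝ => incGamma k ((k : ℝ) + 1 + y) / k.factorial)
      (((k : ℝ) + 1) / ((k : ℝ) + 1 + y) * dens k y) y := by
  have h0 : HasDerivAt (fun y : ℝ => (k : ℝ) + 1 + y) 1 y := (hasDerivAt_id y).const_add _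
  have h := ((incGamma_hasDerivAt k ((k : ℝ) + 1 + y)).comp y h0).div_const (k.factorial : ℝ)
  have hp : (k : ℝ) + 1 + y ≠ 0 := by positivity
  have hf : (k.factorial : ℝ) ≠ 0 := by positivity
  refine h.congr_deriv ?_
  unfold dens
  rw [Nat.factorial_succ]
  push_cast
  field_simp
  ring

lemma quad_pos {m y : ℝ} (hm : 0 < m) (h0 : 0 ≤ y) (h1 : y ≤ 1) : 0 < m + 2 * y - y ^ 2 := by
  nlinarith

/-- The derivative of `gap`, with the quotients `A` and `B` differentiated explicitly. -/
lemma gap_hasDerivAt (k : ℕ) {y : ℝ} (h0 : 0 ≤ y) (h1 : y ≤ 1) {m Q : ℝ} (hm : m = (k : ℝ) + 1)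
    (hQ : Q = m + 2 * y - y ^ 2) :
    HasDerivAt (gap k) (m / (m + y) * dens k y - (m + 1) * (m + y ^ 2) / Q ^ 2
      - (((2 * m + 1) * (m + y ^ 2) + 2 * m * y + 2 * y ^ 2) / Q ^ 2 * dens k y
        + y * (2 * m + 1 + y) / Q * (-(y / (m + y)) * dens k y))) y := by
  subst hm
  have hQ0 : Q ≠ 0 := by
    rw [hQ]
    exact (quad_pos (by positivity) h0 h1).ne'
  have hQd : HasDerivAt (fun y : ℝ => (k : ℝ) + 1 + 2 * y - y ^ 2) (2 - 2 * y) y := by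
    have := (((hasDerivAt_id y).const_mul 2).const_add ((k : ℝ) + 1)).sub (hasDerivAt_pow 2 y)
    refine this.congr_deriv ?_
    simp
  have hA : HasDerivAt (fun y : ℝ => ((k : ℝ) + 2) * y / ((k : ℝ) + 1 + 2 * y - y ^ 2))
      (((k : ℝ) + 1 + 1) * ((k : ℝ) + 1 + y ^ 2) / Q ^ 2) y := by
    have := ((hasDerivAt_id y).const_mul ((k : ℝ) + 2)).div hQd (hQ ▸ hQ0)
    refine this.congr_deriv ?_
    rw [← hQ]
    congr 1
    rw [hQ]
    simp only [id]
    ring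
  have hB : HasDerivAt (fun y : ℝ => y * (2 * (k : ℝ) + 3 + y) / ((k : ℝ) + 1 + 2 * y - y ^ 2))
      (((2 * ((k : ℝ) + 1) + 1) * ((k : ℝ) + 1 + y ^ 2) + 2 * ((k : ℝ) + 1) * y + 2 * y ^ 2)
        / Q ^ 2) y := by
    have := ((hasDerivAt_id y).mul ((hasDerivAt_id y).const_add (2 * (k : ℝ) + 3))).div hQd
      (hQ ▸ hQ0)
    refine this.congr_deriv ?_
    rw [← hQ]
    congr 1
    rw [hQ]
    simp only [id, Pi.mul_apply]
    ring
  have h := ((incGamma_shift_hasDerivAt k h0).sub hA).sub (hB.mul (dens_hasDerivAt k h0))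
  refine h.congr_deriv ?_
  rw [← hQ]
  ring

/-- The explicit derivative of `gap` is negative for every value `D > 0` of the density. -/
lemma gap_deriv_neg {m y Q D : ℝ} (hm : 0 < m) (h0 : 0 ≤ y) (h1 : y ≤ 1)
    (hQ : Q = m + 2 * y - y ^ 2) (hD : 0 < D) :
    m / (m + y) * D - (m + 1) * (m + y ^ 2) / Q ^ 2
      - (((2 * m + 1) * (m + y ^ 2) + 2 * m * y + 2 * y ^ 2) / Q ^ 2 * D
        + y * (2 * m + 1 + y) / Q * (-(y / (m + y)) * D)) < 0 := by
  have hQ0 : 0 < Q := hQ ▸ quad_pos hm h0 h1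
  have hA : 0 < (m + 1) * (m + y ^ 2) / Q ^ 2 := by positivity
  -- The coefficient of `D` equals `-R / ((m + y) Q²)` with `R` a polynomial positive on the range.
  have hR : 0 < m ^ 3 + m ^ 2 * (1 + 2 * y ^ 2) + m * (y + y ^ 3 + y ^ 4)
      + (y ^ 3 * (1 - y) + y ^ 5) := by
    have : 0 ≤ 1 - y := by linarith
    positivity
  have key : m / (m + y) * D - (((2 * m + 1) * (m + y ^ 2) + 2 * m * y + 2 * y ^ 2) / Q ^ 2 * D
        + y * (2 * m + 1 + y) / Q * (-(y / (m + y)) * D))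
      = -(D * (m ^ 3 + m ^ 2 * (1 + 2 * y ^ 2) + m * (y + y ^ 3 + y ^ 4)
      + (y ^ 3 * (1 - y) + y ^ 5)) / ((m + y) * Q ^ 2)) := by
    have : m + y ≠ 0 := by positivity
    field_simp
    rw [hQ]
    ring
  have : 0 < D * (m ^ 3 + m ^ 2 * (1 + 2 * y ^ 2) + m * (y + y ^ 3 + y ^ 4)
      + (y ^ 3 * (1 - y) + y ^ 5)) / ((m + y) * Q ^ 2) := by positivity
  linarith

lemma gap_strictAntiOn (k : ℕ) : StrictAntiOn (gap k) (Icc 0 1) := by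
  refine strictAntiOn_of_deriv_neg (convex_Icc 0 1) (fun y hy =>
    (gap_hasDerivAt k hy.1 hy.2 rfl rfl).continuousAt.continuousWithinAt) (fun y hy => ?_)
  rw [interior_Icc] at hy
  rw [(gap_hasDerivAt k hy.1.le hy.2.le rfl rfl).deriv]
  exact gap_deriv_neg (by positivity) hy.1.le hy.2.le rfl (dens_pos k hy.1.le)

lemma exists_gap_eq_zero (k : ℕ) : ∃ y ∈ Ioo (0:ℝ) 1, gap k y = 0 := by
  have hc : ContinuousOn (gap k) (Icc 0 1) := fun y hy =>
    (gap_hasDerivAt k hy.1 hy.2 rfl rfl).continuousAt.continuousWithinAt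
  have h0 : 0 < gap k 0 := by
    have := incGamma_pos k (u := (k : ℝ) + 1) (by positivity)
    unfold gap
    simp only [mul_zero, zero_mul, zero_div, add_zero, sub_zero]
    positivity
  have h1 : gap k 1 < 0 := by
    have hP : incGamma k ((k : ℝ) + 1 + 1) / k.factorial < 1 := by
      rw [div_lt_one (by positivity)]
      exact incGamma_lt_factorial k (by positivity)
    have hD := dens_pos k zero_le_one
    have hA : ((k : ℝ) + 2) * 1 / ((k : ℝ) + 1 + 2 * 1 - 1 ^ 2) = 1 := by
      rw [div_eq_one_iff_eq] <;> ring_nf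
      positivity
    have hB : 1 * (2 * (k : ℝ) + 3 + 1) / ((k : ℝ) + 1 + 2 * 1 - 1 ^ 2) = 2 := by
      have : (k : ℝ) + 1 + 2 * 1 - 1 ^ 2 = k + 2 := by ring
      rw [this]
      field_simp
      ring
    unfold gap
    rw [hA, hB]
    linarith
  obtain ⟨y, hy, h⟩ := intermediate_value_Ioo' zero_le_one hc ⟨h1, h0⟩
  exact ⟨y, hy, h⟩

/-! ### The correspondence between the ratio and `Ω_il` -/

/-- `y = Ω_il(r) - m` lies in `(0, 1)` and solves `y² + m (r + 1) y = m r`. -/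
lemma omega_quadratic (k : ℕ) {r : ℝ} (hr : 0 < r) :
    ∃ y ∈ Ioo (0:ℝ) 1, OmegaR (k + 2) r = (k : ℝ) + 1 + y ∧
      y ^ 2 + ((k : ℝ) + 1) * (r + 1) * y = ((k : ℝ) + 1) * r := by
  set m : ℝ := (k : ℝ) + 1 with hm
  have hm0 : 0 < m := by positivity
  have hcast : ((k + 2 : ℕ) : ℝ) - 1 = m := by
    push_cast
    rw [hm]
    ring
  set S := Real.sqrt (1 + 4 * r / (m * (r + 1) ^ 2)) with hS
  have hS2 : S ^ 2 = 1 + 4 * r / (m * (r + 1) ^ 2) := Real.sq_sqrt (by positivity)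
  have hS1 : 1 < S := by
    rw [hS, Real.lt_sqrt zero_le_one]
    have : 0 < 4 * r / (m * (r + 1) ^ 2) := by positivity
    linarith
  have hq : (m * ((r + 1) / 2 * (S - 1))) ^ 2 + m * (r + 1) * (m * ((r + 1) / 2 * (S - 1)))
      = m * r := by
    have : (m * ((r + 1) / 2 * (S - 1))) ^ 2 + m * (r + 1) * (m * ((r + 1) / 2 * (S - 1)))
      = m ^ 2 * (r + 1) ^ 2 / 4 * (S ^ 2 - 1) := by ring
    rw [this, hS2]
    field_simp
    ring
  have hpos : 0 < m * ((r + 1) / 2 * (S - 1)) := by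
    have : 0 < S - 1 := by linarith
    positivity
  refine ⟨m * ((r + 1) / 2 * (S - 1)), ⟨hpos, ?_⟩, ?_, hq⟩
  · by_contra! hge
    have : m * (r + 1) * 1 ≤ m * (r + 1) * (m * ((r + 1) / 2 * (S - 1))) := by gcongr
    nlinarith
  · unfold OmegaR
    rw [hcast, ← hS]
    ring

lemma omega_eq_of_quadratic (k : ℕ) {r y : ℝ} (hr : 0 < r) (hy : 0 < y)
    (h : y ^ 2 + ((k : ℝ) + 1) * (r + 1) * y = ((k : ℝ) + 1) * r) :
    OmegaR (k + 2) r = (k : ℝ) + 1 + y := by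
  obtain ⟨z, hz, hO, hq⟩ := omega_quadratic k hr
  have h2 : (z - y) * (z + y + ((k : ℝ) + 1) * (r + 1)) = 0 := by linear_combination hq - h
  have h3 : z + y + ((k : ℝ) + 1) * (r + 1) ≠ 0 := by
    have := hz.1
    positivity
  have h4 := (mul_eq_zero.mp h2).resolve_right h3
  rw [hO]
  linarith

/-! ### Reduction of the identities to `gap y = 0` -/

/-- The defining identity for `Ω = m + y` is equivalent to `gap y = 0`; the recurrence of the
incomplete gamma function eliminates `γ(m + 2, Ω)`. -/
lemma identity_iff_gap (k : ℕ) {y : ℝ} (hy : y ∈ Ioo (0:ℝ) 1) :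
    lowerGamma ((k : ℝ) + 1) (k + 1 + y) / (1 - lowerGamma ((k : ℝ) + 2 + 1) (k + 1 + y)) =
      ((k : ℝ) + 2) * y / (((k : ℝ) + 1 + y) * (1 - y)) ↔ gap k y = 0 := by
  have h0 := hy.1
  have h1 : 0 < 1 - y := by linarith [hy.2]
  have hu : 0 < (k : ℝ) + 1 + y := by positivity
  have hQ := quad_pos (m := (k : ℝ) + 1) (by positivity) h0.le hy.2.le
  have hc : ((k : ℝ) + 2 + 1) = ((k + 2 : ℕ) : ℝ) + 1 := by push_cast; ring
  have hT : lowerGamma ((k : ℝ) + 2 + 1) (k + 1 + y) < 1 := by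
    rw [hc, lowerGamma_eq, div_lt_one (by positivity)]
    exact incGamma_lt_factorial _ hu
  have hrec : lowerGamma ((k : ℝ) + 2 + 1) (k + 1 + y)
      = incGamma k (k + 1 + y) / k.factorial
        - dens k y * (1 + ((k : ℝ) + 1 + y) / (k + 2)) := by
    rw [hc, lowerGamma_eq, incGamma_succ, incGamma_succ]
    unfold dens
    rw [Nat.factorial_succ (k + 1), Nat.factorial_succ k]
    have : (k.factorial : ℝ) ≠ 0 := by positivity
    push_cast
    field_simp
    ring
  have hT' : 1 - lowerGamma ((k : ℝ) + 2 + 1) (k + 1 + y) ≠ 0 := by linarith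
  rw [div_eq_div_iff hT' (by positivity), hrec, lowerGamma_eq]
  unfold gap
  generalize incGamma k (k + 1 + y) / k.factorial = P
  generalize dens k y = D
  have hE : P - ((k : ℝ) + 2) * y / ((k : ℝ) + 1 + 2 * y - y ^ 2)
      - y * (2 * (k : ℝ) + 3 + y) / ((k : ℝ) + 1 + 2 * y - y ^ 2) * D
      = (P * (((k : ℝ) + 1 + y) * (1 - y))
        - ((k : ℝ) + 2) * y * (1 - (P - D * (1 + ((k : ℝ) + 1 + y) / (k + 2)))))
        / ((k : ℝ) + 1 + 2 * y - y ^ 2) := by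
    field_simp
    ring
  rw [hE, div_eq_zero_iff, sub_eq_zero]
  simp [hQ.ne']

/-- For `r = Ω (Ω - m) / (m (ν - Ω))` the defining identity implies the stationarity condition of
the risk. The quadratic equation `hq` encodes this relation between `r` and `Ω = m + y`. -/
lemma stationary_of_identity {m y r P T : ℝ} (hm : 0 < m) (hy : y ∈ Ioo (0:ℝ) 1) (hP : P ≠ 0)
    (hT : T ≠ 0) (hq : y ^ 2 + m * (r + 1) * y = m * r)
    (h : P / T = (m + 1) * y / ((m + y) * (1 - y))) :
    (m + y) ^ 2 / ((m + 1) * m) = r * T / P := by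
  have h0 := hy.1
  have h1 : 0 < 1 - y := by linarith [hy.2]
  have hr : r = y * (m + y) / (m * (1 - y)) := by
    rw [eq_div_iff (by positivity)]
    linarith
  rw [div_eq_div_iff hT (by positivity)] at h
  rw [div_eq_div_iff (by positivity) hP, hr]
  field_simp
  linear_combination h

theorem stmt11 (ν : ℕ) (hν : 2 ≤ ν) :
    ∃! r : ℝ, 0 < r ∧
      lowerGamma ((ν : ℝ) - 1) (OmegaR ν r) /
          (1 - lowerGamma ((ν : ℝ) + 1) (OmegaR ν r)) =
        (ν : ℝ) * (OmegaR ν r - (ν : ℝ) + 1) /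
          (OmegaR ν r * ((ν : ℝ) - OmegaR ν r)) ∧
      (OmegaR ν r) ^ 2 / ((ν : ℝ) * ((ν : ℝ) - 1)) =
        r * (1 - lowerGamma ((ν : ℝ) + 1) (OmegaR ν r)) /
          lowerGamma ((ν : ℝ) - 1) (OmegaR ν r) := by
  obtain ⟨k, rfl⟩ : ∃ k, ν = k + 2 := ⟨ν - 2, by omega⟩
  have hc : ((k + 2 : ℕ) : ℝ) = (k : ℝ) + 2 := by push_cast; ring
  have hc1 : (k : ℝ) + 2 - 1 = k + 1 := by ring
  have hs : ∀ y : ℝ, (k : ℝ) + 1 + y - (k + 2) + 1 = y := fun y => by ring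
  have hs' : ∀ y : ℝ, (k : ℝ) + 2 - (k + 1 + y) = 1 - y := fun y => by ring
  obtain ⟨y, hy, hgap⟩ := exists_gap_eq_zero k
  have h0 := hy.1
  have h1 : 0 < 1 - y := by linarith [hy.2]
  have hr : 0 < y * ((k : ℝ) + 1 + y) / ((k + 1) * (1 - y)) := by positivity
  have hq : y ^ 2 + ((k : ℝ) + 1) * (y * ((k : ℝ) + 1 + y) / ((k + 1) * (1 - y)) + 1) * y
      = ((k : ℝ) + 1) * (y * ((k : ℝ) + 1 + y) / ((k + 1) * (1 - y))) := by
    field_simp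
    ring
  refine ⟨y * ((k : ℝ) + 1 + y) / ((k + 1) * (1 - y)), ⟨hr, ?_⟩, ?_⟩
  · rw [omega_eq_of_quadratic k hr h0 hq, hc, hc1, hs, hs']
    have hid := (identity_iff_gap k hy).2 hgap
    refine ⟨hid, ?_⟩
    have hu : 0 < (k : ℝ) + 1 + y := by positivity
    have hP : lowerGamma ((k : ℝ) + 1) (k + 1 + y) ≠ 0 := by
      rw [lowerGamma_eq]
      have := incGamma_pos k hu
      positivity
    have hT : 1 - lowerGamma ((k : ℝ) + 2 + 1) (k + 1 + y) ≠ 0 := by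
      have : lowerGamma (((k + 2 : ℕ) : ℝ) + 1) (k + 1 + y) < 1 := by
        rw [lowerGamma_eq, div_lt_one (by positivity)]
        exact incGamma_lt_factorial _ hu
      rw [hc] at this
      linarith
    have hk : (k : ℝ) + 2 = k + 1 + 1 := by ring
    have := stationary_of_identity (m := (k : ℝ) + 1) (by positivity) hy hP hT hq
      (by rw [hid, hk])
    rw [← this, hk]
  · rintro r' ⟨hr', hid', -⟩
    obtain ⟨z, hz, hO, hqz⟩ := omega_quadratic k hr'
    rw [hO, hc, hc1, hs, hs', identity_iff_gap k hz] at hid'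
    have hzy : z = y := (gap_strictAntiOn k).injOn (Ioo_subset_Icc_self hz)
      (Ioo_subset_Icc_self hy) (hid'.trans hgap.symm)
    subst hzy
    rw [eq_div_iff (by positivity)]
    linarith
end

section
/- For each integer ν ≥ 2, let Ω*_ν be the unique positive solution of γ(ν−1, Ω) = 1/2, and define R̄_ν = 2(ν−1)^{ν−2} e^{−(ν−1)}/(ν−2)! and R*_ν = 2(Ω*_ν)^{ν−1} e^{−Ω*_ν}/(ν−1)!. Then lim_{ν→∞} R̄_ν / R*_ν = 1. -/
open Real Filter Set

/-- The unnormalized Gamma density of shape `k + 1`. -/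
noncomputable def gammaKernel (k : ℕ) (s : ℝ) : ℝ := s ^ k * Real.exp (-s)

lemma continuous_gammaKernel (k : ℕ) : Continuous (gammaKernel k) := by
  unfold gammaKernel; fun_prop

lemma gammaKernel_pos (k : ℕ) {s : ℝ} (hs : 0 < s) : 0 < gammaKernel k s := by
  unfold gammaKernel; positivity

lemma gammaKernel_nonneg (k : ℕ) {s : ℝ} (hs : 0 ≤ s) : 0 ≤ gammaKernel k s := by
  unfold gammaKernel; positivity

lemma intervalIntegrable_gammaKernel (k : ℕ) (a b : ℝ) :
    IntervalIntegrable (gammaKernel k) MeasureTheory.volume a b :=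
  (continuous_gammaKernel k).intervalIntegrable a b

lemma tendsto_integral_gammaKernel (k : ℕ) :
    Tendsto (fun x : ℝ => ∫ s in (0:ℝ)..x, gammaKernel k s) atTop
      (nhds (Nat.factorial k : ℝ)) := by
  have hpos : (0:ℝ) < (k:ℝ) + 1 := by positivity
  have hfun : EqOn (fun x : ℝ => Real.exp (-x) * x ^ ((k:ℝ) + 1 - 1)) (gammaKernel k) (Ioi 0) := by
    intro x _
    simp [gammaKernel, mul_comm]
  have hint : MeasureTheory.IntegrableOn (gammaKernel k) (Ioi 0) :=
    (Real.GammaIntegral_convergent hpos).congr_fun hfun measurableSet_Ioi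
  have hval : ∫ s in Ioi (0:ℝ), gammaKernel k s = (Nat.factorial k : ℝ) := by
    rw [← Real.Gamma_nat_eq_factorial, Real.Gamma_eq_integral hpos]
    exact (MeasureTheory.setIntegral_congr_fun measurableSet_Ioi hfun).symm
  rw [← hval]
  exact MeasureTheory.intervalIntegral_tendsto_integral_Ioi 0 hint tendsto_id

lemma integral_gammaKernel_mono (k : ℕ) {a b c d : ℝ} (ha : 0 ≤ a) (hca : a ≤ c) (hcd : c ≤ d)
    (hdb : d ≤ b) : ∫ s in c..d, gammaKernel k s ≤ ∫ s in a..b, gammaKernel k s := by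
  refine intervalIntegral.integral_mono_interval hca hcd hdb ?_
    (intervalIntegrable_gammaKernel k a b)
  filter_upwards [MeasureTheory.ae_restrict_mem measurableSet_Ioc] with s hs
  exact gammaKernel_nonneg k (ha.trans hs.1.le)

lemma integral_gammaKernel_le_factorial (k : ℕ) {x : ℝ} (hx : 0 ≤ x) :
    ∫ s in (0:ℝ)..x, gammaKernel k s ≤ (Nat.factorial k : ℝ) := by
  refine ge_of_tendsto (tendsto_integral_gammaKernel k) ?_
  filter_upwards [eventually_ge_atTop x] with y hy
  exact integral_gammaKernel_mono k le_rfl le_rfl hx hy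

/-- Right of its mode `k` the density is at least as large as at the mirror point. -/
lemma gammaKernel_reflect_mode (k : ℕ) {s : ℝ} (hs0 : 0 ≤ s) (hsk : s ≤ k) :
    gammaKernel k s ≤ gammaKernel k (2 * k - s) := by
  rcases hs0.eq_or_lt with rfl | hs
  · rcases Nat.eq_zero_or_pos k with rfl | hk
    · simp [gammaKernel]
    · have h0 : gammaKernel k 0 = 0 := by simp [gammaKernel, hk.ne']
      rw [h0]
      exact gammaKernel_nonneg k (by simp)
  · have hk : (0:ℝ) < k := hs.trans_le hsk
    have ht : 0 < 2 * (k:ℝ) - s := by linarith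
    -- `2 z / (z + 2) ≤ log (1 + z)`, with `z` such that `1 + z = (2 k - s) / s`.
    have hz : 0 ≤ 2 * ((k:ℝ) - s) / s := by
      have : 0 ≤ (k:ℝ) - s := by linarith
      positivity
    have h := Real.le_log_one_add_of_nonneg hz
    have e1 : 1 + 2 * ((k:ℝ) - s) / s = (2 * k - s) / s := by field_simp; ring
    have e2 : 2 * (2 * ((k:ℝ) - s) / s) / (2 * ((k:ℝ) - s) / s + 2) = 2 * (k - s) / k := by
      have : 2 * ((k:ℝ) - s) / s + 2 = 2 * k / s := by field_simp; ring
      rw [this]; field_simp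
    rw [e1, e2, Real.log_div ht.ne' hs.ne', div_le_iff₀ hk] at h
    rw [← Real.log_le_log_iff (gammaKernel_pos k hs) (gammaKernel_pos k ht)]
    unfold gammaKernel
    rw [Real.log_mul (by positivity) (by positivity), Real.log_mul (by positivity) (by positivity),
      Real.log_pow, Real.log_pow, Real.log_exp, Real.log_exp]
    linarith

lemma two_mul_integral_le_factorial (k : ℕ) :
    2 * ∫ s in (0:ℝ)..k, gammaKernel k s ≤ (Nat.factorial k : ℝ) := by
  have hk : (0:ℝ) ≤ k := k.cast_nonneg
  have h1 : ∫ s in (0:ℝ)..k, gammaKernel k s ≤ ∫ s in (0:ℝ)..k, gammaKernel k (2 * k - s) := by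
    refine intervalIntegral.integral_mono_on hk (intervalIntegrable_gammaKernel k _ _)
      (((continuous_gammaKernel k).comp (by fun_prop)).intervalIntegrable _ _) ?_
    intro s hs
    exact gammaKernel_reflect_mode k hs.1 hs.2
  have h2 : ∫ s in (0:ℝ)..k, gammaKernel k (2 * k - s)
      = ∫ s in (k:ℝ)..(2 * k), gammaKernel k s := by
    rw [intervalIntegral.integral_comp_sub_left (gammaKernel k) (2 * (k:ℝ))]
    congr 1 <;> ring
  have h3 := intervalIntegral.integral_add_adjacent_intervals
    (intervalIntegrable_gammaKernel k 0 k) (intervalIntegrable_gammaKernel k k (2 * k))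
  have h4 := integral_gammaKernel_le_factorial k (x := 2 * k) (by positivity)
  linarith

/-- The push-forward of the density on `[N, ∞)` under `s ↦ N ^ 2 / s` is dominated by the density
on `(0, N]`, for `N = k + 1`; here this is expressed at the point `s ≥ N`. -/
lemma gammaKernel_reflect_mean (k : ℕ) {s : ℝ} (hs : (k:ℝ) + 1 ≤ s) :
    gammaKernel k s ≤ gammaKernel k (((k:ℝ) + 1) ^ 2 / s) * (((k:ℝ) + 1) ^ 2 / s ^ 2) := by
  set N : ℝ := (k:ℝ) + 1 with hN
  have hNpos : 0 < N := by positivity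
  have hs0 : 0 < s := hNpos.trans_le hs
  have hy : 0 < s / N := by positivity
  have h : Real.log (s / N) ≤ Real.sinh (Real.log (s / N)) :=
    Real.self_le_sinh_iff.2 (Real.log_nonneg ((one_le_div hNpos).2 hs))
  rw [Real.sinh_log hy, inv_div, Real.log_div hs0.ne' hNpos.ne'] at h
  have h' : 2 * N * (Real.log s - Real.log N) ≤ s - N ^ 2 / s := by
    have e : s - N ^ 2 / s = 2 * N * ((s / N - N / s) / 2) := by field_simp
    rw [e]
    exact mul_le_mul_of_nonneg_left h (by positivity)
  have hq : 0 < N ^ 2 / s := by positivity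
  have hp := gammaKernel_pos k hq
  rw [← Real.log_le_log_iff (gammaKernel_pos k hs0) (by positivity),
    Real.log_mul hp.ne' (by positivity)]
  unfold gammaKernel
  rw [Real.log_mul (by positivity) (by positivity), Real.log_mul (by positivity) (by positivity),
    Real.log_pow, Real.log_pow, Real.log_exp, Real.log_exp,
    Real.log_div (by positivity) (by positivity), Real.log_div (by positivity) (by positivity),
    Real.log_pow, Real.log_pow]
  have hk : (k:ℝ) = N - 1 := by rw [hN]; ring
  rw [hk]
  push_cast
  linarith

lemma factorial_le_two_mul_integral (k : ℕ) :
    (Nat.factorial k : ℝ) ≤ 2 * ∫ s in (0:ℝ)..((k:ℝ) + 1), gammaKernel k s := by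
  set N : ℝ := (k:ℝ) + 1 with hN
  have hNpos : 0 < N := by positivity
  refine le_of_tendsto (tendsto_integral_gammaKernel k) ?_
  filter_upwards [eventually_ge_atTop N] with x hx
  have hx0 : 0 < x := hNpos.trans_le hx
  have hne : ∀ s ∈ uIcc N x, s ≠ 0 := by
    intro s hs
    rw [uIcc_of_le hx] at hs
    exact (hNpos.trans_le hs.1).ne'
  have hcont : ContinuousOn (fun s : ℝ => N ^ 2 / s) (uIcc N x) :=
    continuousOn_const.div continuousOn_id hne
  have hcont' : ContinuousOn (fun s : ℝ => N ^ 2 / s ^ 2) (uIcc N x) :=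
    continuousOn_const.div (by fun_prop) fun s hs => pow_ne_zero 2 (hne s hs)
  have h1 : ∫ s in N..x, gammaKernel k s
      ≤ ∫ s in N..x, gammaKernel k (N ^ 2 / s) * (N ^ 2 / s ^ 2) := by
    refine intervalIntegral.integral_mono_on hx (intervalIntegrable_gammaKernel k _ _)
      (((continuous_gammaKernel k).comp_continuousOn hcont).mul hcont').intervalIntegrable ?_
    intro s hs
    exact gammaKernel_reflect_mean k hs.1
  have h2 : ∫ s in N..x, gammaKernel k (N ^ 2 / s) * (N ^ 2 / s ^ 2)
      = ∫ s in (N ^ 2 / x)..N, gammaKernel k s := by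
    have hsub := intervalIntegral.integral_comp_mul_deriv
      (f := fun s : ℝ => N ^ 2 / s) (f' := fun s => -(N ^ 2 / s ^ 2)) (g := gammaKernel k)
      (a := N) (b := x)
      (fun s hs => by
        have := (hasDerivAt_inv (hne s hs)).const_mul (N ^ 2)
        refine this.congr_deriv ?_
        ring)
      hcont'.neg (continuous_gammaKernel k)
    have e : N ^ 2 / N = N := by field_simp
    simp only [Function.comp_apply, mul_neg, intervalIntegral.integral_neg, e] at hsub
    rw [intervalIntegral.integral_symm N (N ^ 2 / x), ← hsub, neg_neg]
  have h3 : ∫ s in (N ^ 2 / x)..N, gammaKernel k s ≤ ∫ s in (0:ℝ)..N, gammaKernel k s := by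
    refine integral_gammaKernel_mono k le_rfl (by positivity) ?_ le_rfl
    rw [div_le_iff₀ hx0]
    nlinarith
  have h4 := intervalIntegral.integral_add_adjacent_intervals
    (intervalIntegrable_gammaKernel k 0 N) (intervalIntegrable_gammaKernel k N x)
  linarith

lemma integral_gammaKernel_lt (k : ℕ) {a b : ℝ} (ha : 0 ≤ a) (hab : a < b) :
    ∫ s in (0:ℝ)..a, gammaKernel k s < ∫ s in (0:ℝ)..b, gammaKernel k s := by
  have h1 : 0 < ∫ s in a..b, gammaKernel k s :=
    intervalIntegral.intervalIntegral_pos_of_pos_on (intervalIntegrable_gammaKernel k a b)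
      (fun s hs => gammaKernel_pos k (ha.trans_lt hs.1)) hab
  have h2 := intervalIntegral.integral_add_adjacent_intervals
    (intervalIntegrable_gammaKernel k 0 a) (intervalIntegrable_gammaKernel k a b)
  linarith

/-- The median of the Gamma distribution of shape `k + 1` lies between its mode and its mean. -/
lemma median_mem_Icc (k : ℕ) {w : ℝ} (hw : 0 < w) (h : lowerGamma ((k:ℝ) + 1) w = 1 / 2) :
    (k:ℝ) ≤ w ∧ w ≤ (k:ℝ) + 1 := by
  have hfac : (0:ℝ) < (Nat.factorial k : ℝ) := by positivity
  have hI : 2 * ∫ s in (0:ℝ)..w, gammaKernel k s = (Nat.factorial k : ℝ) := by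
    unfold lowerGamma at h
    rw [Real.Gamma_nat_eq_factorial, div_eq_iff hfac.ne'] at h
    simp only [add_sub_cancel_right, Real.rpow_natCast] at h
    unfold gammaKernel
    linarith
  constructor
  · by_contra! hlt
    have := integral_gammaKernel_lt k hw.le hlt
    have := two_mul_integral_le_factorial k
    linarith
  · by_contra! hlt
    have := integral_gammaKernel_lt k (by positivity) hlt
    have := factorial_le_two_mul_integral k
    linarith

lemma ratio_bounds (k : ℕ) (hk : 1 ≤ k) {w : ℝ} (h1 : (k:ℝ) ≤ w) (h2 : w ≤ (k:ℝ) + 1) :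
    1 ≤ ((k:ℝ) + 1) ^ (k + 1) * Real.exp (-((k:ℝ) + 1)) / (w ^ (k + 1) * Real.exp (-w)) ∧
    ((k:ℝ) + 1) ^ (k + 1) * Real.exp (-((k:ℝ) + 1)) / (w ^ (k + 1) * Real.exp (-w))
      ≤ Real.exp (1 / (k:ℝ)) := by
  have hk0 : (0:ℝ) < k := by exact_mod_cast hk
  have hw : 0 < w := hk0.trans_le h1
  set N : ℝ := (k:ℝ) + 1 with hN
  have hNpos : 0 < N := by positivity
  have hy : 0 < N / w := by positivity
  have e : N ^ (k + 1) * Real.exp (-N) / (w ^ (k + 1) * Real.exp (-w))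
      = Real.exp (N * Real.log (N / w) + w - N) := by
    have : Real.exp (N * Real.log (N / w)) = (N / w) ^ (k + 1) := by
      rw [← Real.exp_log (pow_pos hy (k + 1)), Real.log_pow, hN]
      push_cast; rfl
    rw [show N * Real.log (N / w) + w - N = N * Real.log (N / w) + (-N) - (-w) by ring,
      Real.exp_sub, Real.exp_add, this, div_pow]
    field_simp
  rw [e]
  constructor
  · rw [Real.one_le_exp_iff]
    have h := mul_le_mul_of_nonneg_left (Real.one_sub_inv_le_log_of_pos hy) hNpos.le
    have h3 : N * (1 - (N / w)⁻¹) = N - w := by field_simp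
    linarith
  · rw [Real.exp_le_exp]
    have h := mul_le_mul_of_nonneg_left (Real.log_le_sub_one_of_pos hy) hNpos.le
    have h3 : N * (N / w - 1) + w - N = (N - w) ^ 2 / w := by field_simp; ring
    have h4 : (N - w) ^ 2 / w ≤ 1 / k :=
      div_le_div₀ zero_le_one (by nlinarith) hk0 h1
    linarith

theorem stmt12 (Ωs : ℕ → ℝ)
    (hΩs : ∀ ν : ℕ, 2 ≤ ν → 0 < Ωs ν ∧ lowerGamma ((ν : ℝ) - 1) (Ωs ν) = 1 / 2) :
    Filter.Tendsto
      (fun ν : ℕ =>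
        (2 * ((ν : ℝ) - 1) ^ (ν - 2) * Real.exp (-((ν : ℝ) - 1)) / (Nat.factorial (ν - 2))) /
          (2 * (Ωs ν) ^ (ν - 1) * Real.exp (-(Ωs ν)) / (Nat.factorial (ν - 1))))
      Filter.atTop (nhds 1) := by
  rw [← tendsto_add_atTop_iff_nat 2]
  have key : ∀ k : ℕ,
      (2 * (((k + 2 : ℕ) : ℝ) - 1) ^ (k + 2 - 2) * Real.exp (-(((k + 2 : ℕ) : ℝ) - 1))
          / (Nat.factorial (k + 2 - 2))) /
        (2 * (Ωs (k + 2)) ^ (k + 2 - 1) * Real.exp (-(Ωs (k + 2))) / (Nat.factorial (k + 2 - 1)))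
      = ((k:ℝ) + 1) ^ (k + 1) * Real.exp (-((k:ℝ) + 1))
        / ((Ωs (k + 2)) ^ (k + 1) * Real.exp (-(Ωs (k + 2)))) := by
    intro k
    have hw := (hΩs (k + 2) (by omega)).1
    have e1 : ((k + 2 : ℕ) : ℝ) - 1 = (k:ℝ) + 1 := by push_cast; ring
    have e2 : k + 2 - 2 = k := by omega
    have e3 : k + 2 - 1 = k + 1 := by omega
    have hfac : (Nat.factorial k : ℝ) ≠ 0 := by positivity
    rw [e1, e2, e3, Nat.factorial_succ]
    push_cast
    field_simp
    ring
  have hb : ∀ k : ℕ, (k:ℝ) ≤ Ωs (k + 2) ∧ Ωs (k + 2) ≤ (k:ℝ) + 1 := by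
    intro k
    obtain ⟨hw, h⟩ := hΩs (k + 2) (by omega)
    refine median_mem_Icc k hw ?_
    rw [← h]
    congr 1
    push_cast; ring
  have hlim : Tendsto (fun k : ℕ => Real.exp (1 / (k:ℝ))) atTop (nhds 1) := by
    have := (Real.continuous_exp.tendsto 0).comp tendsto_one_div_atTop_nhds_zero_nat
    rwa [Real.exp_zero] at this
  refine tendsto_of_tendsto_of_tendsto_of_le_of_le' tendsto_const_nhds hlim ?_ ?_
  · filter_upwards [eventually_ge_atTop 1] with k hk
    rw [key k]
    exact (ratio_bounds k hk (hb k).1 (hb k).2).1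
  · filter_upwards [eventually_ge_atTop 1] with k hk
    rw [key k]
    exact (ratio_bounds k hk (hb k).1 (hb k).2).2
end
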